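/- arXiv:0901.3599 — 3 statements merged into one kernel-verified Lean document; each statement's English description precedes it below -/
import Mathlib

section
/- The quotient group Λ4♯/Λ4 has exactly 64 elements, consisting of: the zero coset; exactly 24 cosets of minimal norm 1/2, each of order 4; exactly 12 cosets of minimal norm 1, each of order 2; exactly 24 cosets of minimal norm 3/2, each of order 4; and exactly 3 cosets of minimal norm 2, each of order 2. Here the minimal norm of a coset is the minimum of ‖x‖² over x in the coset. -/
noncomputable section

open scoped RealInnerProductSpace

/-- `ℝ^n` with the standard inner product. -/
abbrev E (n : ℕ) := EuclideanSpace ℝ (Fin n)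

/-- The standard basis vector `ε i`. -/
def εv {n : ℕ} (i : Fin n) : E n := EuclideanSpace.single i 1

/-- The vector of `ℝ^n` with the given coordinates. -/
def vec {n : ℕ} (x : Fin n → ℝ) : E n := (WithLp.equiv 2 (Fin n → ℝ)).symm x

/-- The vector of `ℝ^n` with the given integer coordinates. -/
def intVec {n : ℕ} (x : Fin n → ℤ) : E n := (WithLp.equiv 2 (Fin n → ℝ)).symm fun i => (x i : ℝ)

/-- A lattice is integral if all pairwise inner products of its elements are integers. -/
def LatticeIsIntegral {n : ℕ} (L : Submodule ℤ (E n)) : Prop :=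
  ∀ x ∈ L, ∀ y ∈ L, ∃ k : ℤ, ⟪x, y⟫ = (k : ℝ)

/-- Two lattices are isometric if a linear isometry of the ambient space carries
one onto the other. -/
def IsometricLattices {n : ℕ} (L M : Submodule ℤ (E n)) : Prop :=
  ∃ g : E n ≃ₗᵢ[ℝ] E n, g '' (L : Set (E n)) = (M : Set (E n))

/-- The laminated lattice `Λ₄`, the ℤ-span of `2ε1, 2ε2, 2ε3, ε1+ε2+ε3+ε4`, i.e.
`{x ∈ ℤ⁴ : x 0 ≡ x 1 ≡ x 2 ≡ x 3 (mod 2)} ≅ √2·D₄`. -/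
def Λ4 : Submodule ℤ (E 4) :=
  Submodule.span ℤ {(2 : ℝ) • εv 0, (2 : ℝ) • εv 1, (2 : ℝ) • εv 2, εv 0 + εv 1 + εv 2 + εv 3}

/-- The dual lattice `Λ♯ = {x : ⟪x,y⟫ ∈ ℤ for all y ∈ Λ}`. -/
def dualLattice {n : ℕ} (Λ : Submodule ℤ (E n)) : Submodule ℤ (E n) where
  carrier := {x | ∀ y ∈ Λ, ∃ k : ℤ, ⟪x, y⟫ = (k : ℝ)}
  zero_mem' := fun y _ => ⟨0, by simp⟩
  add_mem' := by
    intro a b ha hb y hy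
    obtain ⟨k, hk⟩ := ha y hy
    obtain ⟨l, hl⟩ := hb y hy
    exact ⟨k + l, by rw [inner_add_left, hk, hl]; push_cast; ring⟩
  smul_mem' := by
    intro c x hx y hy
    obtain ⟨k, hk⟩ := hx y hy
    refine ⟨c * k, ?_⟩
    rw [← Int.cast_smul_eq_zsmul ℝ c x, real_inner_smul_left, hk]
    push_cast
    ring

/-- The quotient abelian group `Λ♯/Λ`. -/
abbrev DualQuot {n : ℕ} (Λ : Submodule ℤ (E n)) :=
  (dualLattice Λ) ⧸ (Λ.comap (dualLattice Λ).subtype)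

/-- The coset `c ∈ Λ♯/Λ` has minimal norm `m`, i.e. `m` is the minimum of `‖x‖²`
over `x` in the coset `c`. -/
def CosetMinNorm {n : ℕ} (Λ : Submodule ℤ (E n)) (c : DualQuot Λ) (m : ℝ) : Prop :=
  IsLeast {r : ℝ | ∃ x : dualLattice Λ, Submodule.Quotient.mk x = c ∧ r = ‖(x : E n)‖ ^ 2} m

/-- The finite group which receives `Λ₄♯/Λ₄`. -/
abbrev G4 := ZMod 4 × ZMod 4 × ZMod 4 × ZMod 2

/-- Squared distance from `0` of a class mod 4. -/
def sq4 (t : ZMod 4) : ℕ := t.valMinAbs.natAbs ^ 2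

def norm4 (t : ZMod 4) (g : G4) : ℕ :=
  sq4 t + sq4 (t + g.1) + sq4 (t + g.2.1) + sq4 (t + g.2.2.1)

def lift0 (g : G4) : ZMod 4 :=
  let t : ZMod 4 := (g.2.2.2.val : ZMod 4)
  if norm4 t g ≤ norm4 (t + 2) g then t else t + 2

/-- Four times the minimal norm. -/
def min4 (g : G4) : ℕ := norm4 (lift0 g) g

def even4 (g : G4) : Prop := (g.1 + g.2.1 + g.2.2.1).val % 2 = 0

instance : DecidablePred even4 := fun g => by unfold even4; infer_instance

def toG (a : Fin 4 → ℤ) : G4 :=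
  ((a 1 - a 0 : ℤ), (a 2 - a 0 : ℤ), (a 3 - a 0 : ℤ), (a 0 : ℤ))

theorem sq4_le (a : ℤ) : (sq4 (a : ZMod 4) : ℤ) ≤ a ^ 2 := by
  have h : (a : ZMod 4).valMinAbs.natAbs ≤ a.natAbs := by
    apply ZMod.natAbs_min_of_le_div_two 4
    · simp
    · exact ZMod.natAbs_valMinAbs_le _
  unfold sq4
  rw [← Int.natAbs_sq a]
  push_cast
  have : ((a : ZMod 4).valMinAbs.natAbs : ℤ) ≤ (a.natAbs : ℤ) := by exact_mod_cast h
  simp only [Int.natCast_natAbs] at *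
  gcongr

theorem min4_le_norm4 : ∀ (t : ZMod 4) (g : G4), (t.val : ZMod 2) = g.2.2.2 →
    min4 g ≤ norm4 t g := by
  decide +kernel

theorem min4_le (a : Fin 4 → ℤ) :
    (min4 (toG a) : ℤ) ≤ a 0 ^ 2 + a 1 ^ 2 + a 2 ^ 2 + a 3 ^ 2 := by
  have h := min4_le_norm4 (a 0 : ZMod 4) (toG a) (by
    have h2 := ZMod.val_intCast (n := 4) (a 0)
    have h3 : (((a 0 : ZMod 4).val : ℤ) : ZMod 2) = ((a 0 : ℤ) : ZMod 2) := by
      rw [ZMod.intCast_eq_intCast_iff_dvd_sub, h2]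
      push_cast
      omega
    simpa [toG] using h3)
  have h' : (min4 (toG a) : ℤ) ≤ (norm4 (a 0 : ZMod 4) (toG a) : ℤ) := by exact_mod_cast h
  refine h'.trans ?_
  unfold norm4 toG
  push_cast
  simp only [add_sub_cancel]
  linarith [sq4_le (a 0), sq4_le (a 1), sq4_le (a 2), sq4_le (a 3)]

/-- minimal representative -/
def rep4 (g : G4) : Fin 4 → ℤ :=
  ![(lift0 g).valMinAbs, (lift0 g + g.1).valMinAbs, (lift0 g + g.2.1).valMinAbs,
    (lift0 g + g.2.2.1).valMinAbs]

theorem rep4_spec : ∀ g : G4, even4 g → toG (rep4 g) = g ∧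
    (rep4 g 0 + rep4 g 1 + rep4 g 2 + rep4 g 3) % 2 = 0 ∧
    rep4 g 0 ^ 2 + rep4 g 1 ^ 2 + rep4 g 2 ^ 2 + rep4 g 3 ^ 2 = min4 g := by
  decide +kernel

theorem toG_add (a b : Fin 4 → ℤ) : toG (a + b) = toG a + toG b := by
  simp only [toG, Pi.add_apply, Prod.mk_add_mk, Prod.mk.injEq]
  push_cast
  refine ⟨by ring, by ring, by ring, rfl⟩

theorem toG_eq_zero (a : Fin 4 → ℤ) : toG a = 0 ↔
    4 ∣ a 1 - a 0 ∧ 4 ∣ a 2 - a 0 ∧ 4 ∣ a 3 - a 0 ∧ 2 ∣ a 0 := by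
  have h (x : ℤ) := ZMod.intCast_zmod_eq_zero_iff_dvd x 4
  have h2 (x : ℤ) := ZMod.intCast_zmod_eq_zero_iff_dvd x 2
  have e : toG a = 0 ↔ ((a 1 - a 0 : ℤ) : ZMod 4) = 0 ∧ ((a 2 - a 0 : ℤ) : ZMod 4) = 0 ∧
      ((a 3 - a 0 : ℤ) : ZMod 4) = 0 ∧ ((a 0 : ℤ) : ZMod 2) = 0 := by
    simp only [toG, Prod.ext_iff, Prod.fst_zero, Prod.snd_zero]
  rw [e, h, h, h, h2]
  norm_num

theorem even_toG (a : Fin 4 → ℤ) (h : (a 0 + a 1 + a 2 + a 3) % 2 = 0) : even4 (toG a) := by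
  unfold even4 toG
  simp only
  rw [← Int.cast_add, ← Int.cast_add]
  have h2 := ZMod.val_intCast (n := 4) (a 1 - a 0 + (a 2 - a 0) + (a 3 - a 0))
  push_cast at h2 ⊢
  omega

theorem mem_Λ4 (x : E 4) : x ∈ Λ4 ↔ ∃ b : Fin 4 → ℤ, x 0 = 2 * b 0 + b 3 ∧ x 1 = 2 * b 1 + b 3 ∧
    x 2 = 2 * b 2 + b 3 ∧ x 3 = b 3 := by
  unfold Λ4
  simp only [Submodule.mem_span_insert, Submodule.mem_span_singleton]
  constructor
  · rintro ⟨a, _, ⟨b, _, ⟨c, _, ⟨d, rfl⟩, rfl⟩, rfl⟩, rfl⟩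
    refine ⟨![a, b, c, d], ?_⟩
    simp [εv, mul_comm]
  · rintro ⟨b, h0, h1, h2, h3⟩
    refine ⟨b 0, _, ⟨b 1, _, ⟨b 2, _, ⟨b 3, rfl⟩, rfl⟩, rfl⟩, ?_⟩
    ext i
    fin_cases i <;> simp [εv, h0, h1, h2, h3, mul_comm]

theorem mem_dual (x : E 4) : x ∈ dualLattice Λ4 ↔ ∃ a : Fin 4 → ℤ, (∀ i, 2 * x i = a i) ∧
    (a 0 + a 1 + a 2 + a 3) % 2 = 0 := by
  have key (y : E 4) : ⟪x, y⟫ = x 0 * y 0 + x 1 * y 1 + x 2 * y 2 + x 3 * y 3 := by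
    simp [PiLp.inner_apply, Fin.sum_univ_four, mul_comm]
  constructor
  · intro h
    have hm (b : Fin 4 → ℤ) : ∃ k : ℤ, x 0 * (2 * b 0 + b 3) + x 1 * (2 * b 1 + b 3) +
        x 2 * (2 * b 2 + b 3) + x 3 * b 3 = k := by
      have := h (!₂[2 * b 0 + b 3, 2 * b 1 + b 3, 2 * b 2 + b 3, b 3])
        ((mem_Λ4 _).2 ⟨b, by simp⟩)
      simpa [key] using this
    obtain ⟨k0, h0⟩ := hm ![1, 0, 0, 0]
    obtain ⟨k1, h1⟩ := hm ![0, 1, 0, 0]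
    obtain ⟨k2, h2⟩ := hm ![0, 0, 1, 0]
    obtain ⟨k3, h3⟩ := hm ![0, 0, 0, 1]
    simp at h0 h1 h2 h3
    refine ⟨![k0, k1, k2, 2 * k3 - k0 - k1 - k2], ?_, ?_⟩
    · intro i
      fin_cases i <;> simp <;> linarith
    · simp
  · rintro ⟨a, ha, he⟩ y hy
    obtain ⟨b, h0, h1, h2, h3⟩ := (mem_Λ4 y).1 hy
    obtain ⟨k, hk⟩ : ∃ k, a 0 + a 1 + a 2 + a 3 = 2 * k := ⟨_, (Int.mul_ediv_cancel' (Int.dvd_of_emod_eq_zero he)).symm⟩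
    refine ⟨a 0 * b 0 + a 1 * b 1 + a 2 * b 2 + k * b 3, ?_⟩
    have hk' : (a 0 + a 1 + a 2 + a 3 : ℝ) = 2 * k := by exact_mod_cast hk
    rw [key, h0, h1, h2, h3]
    push_cast
    rw [← ha, ← ha, ← ha, ← ha] at hk'
    rw [← ha 0, ← ha 1, ← ha 2]
    linear_combination (b 3 / 2 : ℝ) * hk'

def co (x : dualLattice Λ4) : Fin 4 → ℤ := ((mem_dual x.1).1 x.2).choose

theorem co_spec (x : dualLattice Λ4) (i : Fin 4) : 2 * x.1 i = co x i :=
  ((mem_dual x.1).1 x.2).choose_spec.1 i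

theorem co_even (x : dualLattice Λ4) : (co x 0 + co x 1 + co x 2 + co x 3) % 2 = 0 :=
  ((mem_dual x.1).1 x.2).choose_spec.2

theorem co_eq (x : dualLattice Λ4) (a : Fin 4 → ℤ) (h : ∀ i, 2 * x.1 i = a i) : co x = a := by
  funext i
  have := co_spec x i
  rw [h] at this
  exact (Int.cast_injective (α := ℝ) this).symm

def psi : dualLattice Λ4 →+ G4 :=
  AddMonoidHom.mk' (fun x => toG (co x)) (fun x y => by
    rw [← toG_add]
    congr 1
    apply co_eq
    intro i
    simp [mul_add, co_spec])

theorem psi_apply (x : dualLattice Λ4) : psi x = toG (co x) := rfl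

theorem psi_ker (x : dualLattice Λ4) : psi x = 0 ↔ x.1 ∈ Λ4 := by
  rw [psi_apply, toG_eq_zero, mem_Λ4]
  have c0 := co_spec x 0
  have c1 := co_spec x 1
  have c2 := co_spec x 2
  have c3 := co_spec x 3
  constructor
  · rintro ⟨⟨p, hp⟩, ⟨q, hq⟩, ⟨r, hr⟩, ⟨s, hs⟩⟩
    have hp' : (co x 1 - co x 0 : ℝ) = 4 * p := by exact_mod_cast hp
    have hq' : (co x 2 - co x 0 : ℝ) = 4 * q := by exact_mod_cast hq
    have hr' : (co x 3 - co x 0 : ℝ) = 4 * r := by exact_mod_cast hr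
    have hs' : (co x 0 : ℝ) = 2 * s := by exact_mod_cast hs
    refine ⟨![-r, p - r, q - r, s + 2 * r], ?_, ?_, ?_, ?_⟩ <;> simp <;> linarith
  · rintro ⟨b, h0, h1, h2, h3⟩
    rw [h0] at c0
    rw [h1] at c1
    rw [h2] at c2
    rw [h3] at c3
    have d0 : co x 0 = 2 * (2 * b 0 + b 3) := by
      apply Int.cast_injective (α := ℝ); push_cast; exact c0.symm
    have d1 : co x 1 = 2 * (2 * b 1 + b 3) := by
      apply Int.cast_injective (α := ℝ); push_cast; exact c1.symm
    have d2 : co x 2 = 2 * (2 * b 2 + b 3) := by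
      apply Int.cast_injective (α := ℝ); push_cast; exact c2.symm
    have d3 : co x 3 = 2 * b 3 := by
      apply Int.cast_injective (α := ℝ); push_cast; exact c3.symm
    omega

def phi : DualQuot Λ4 →ₗ[ℤ] G4 :=
  Submodule.liftQ _ psi.toIntLinearMap (fun x hx => (psi_ker x).2 hx)

theorem phi_mk (x : dualLattice Λ4) : phi (Submodule.Quotient.mk x) = toG (co x) := rfl

theorem phi_inj : Function.Injective phi := by
  rw [injective_iff_map_eq_zero]
  intro c
  obtain ⟨x, rfl⟩ := Submodule.Quotient.mk_surjective _ c
  intro h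
  rw [Submodule.Quotient.mk_eq_zero]
  exact (psi_ker x).1 h

theorem phi_even (c : DualQuot Λ4) : even4 (phi c) := by
  obtain ⟨x, rfl⟩ := Submodule.Quotient.mk_surjective _ c
  exact even_toG _ (co_even x)

theorem exists_rep (g : G4) (hg : even4 g) :
    ∃ x : dualLattice Λ4, co x = rep4 g := by
  have h := rep4_spec g hg
  have hx : (!₂[(rep4 g 0 / 2 : ℝ), rep4 g 1 / 2, rep4 g 2 / 2, rep4 g 3 / 2] : E 4)
      ∈ dualLattice Λ4 := by
    refine (mem_dual _).2 ⟨rep4 g, ?_, h.2.1⟩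
    intro i
    fin_cases i <;> simp <;> ring
  refine ⟨⟨_, hx⟩, co_eq _ _ ?_⟩
  intro i
  fin_cases i <;> simp <;> ring

theorem norm_co (x : dualLattice Λ4) :
    ‖(x : E 4)‖ ^ 2 = ((co x 0 ^ 2 + co x 1 ^ 2 + co x 2 ^ 2 + co x 3 ^ 2 : ℤ) : ℝ) / 4 := by
  rw [EuclideanSpace.real_norm_sq_eq, Fin.sum_univ_four]
  push_cast
  simp only [← co_spec]
  ring

theorem minNorm (c : DualQuot Λ4) : CosetMinNorm Λ4 c ((min4 (phi c) : ℝ) / 4) := by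
  constructor
  · obtain ⟨x, hx⟩ := exists_rep (phi c) (phi_even c)
    have h := rep4_spec _ (phi_even c)
    refine ⟨x, phi_inj ?_, ?_⟩
    · rw [phi_mk, hx, h.1]
    · rw [norm_co, hx, h.2.2]
      push_cast
      rfl
  · rintro r ⟨x, rfl, rfl⟩
    rw [norm_co, phi_mk]
    have := min4_le (co x)
    have h : ((min4 (toG (co x)) : ℤ) : ℝ) ≤
      ((co x 0 ^ 2 + co x 1 ^ 2 + co x 2 ^ 2 + co x 3 ^ 2 : ℤ) : ℝ) := by exact_mod_cast this
    rw [Int.cast_natCast] at h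
    linarith

theorem minNorm_iff (c : DualQuot Λ4) (m : ℕ) (r : ℝ) (hr : r = m / 4) :
    CosetMinNorm Λ4 c r ↔ min4 (phi c) = m := by
  subst hr
  constructor
  · intro h
    have := (minNorm c).unique h
    have h2 : (min4 (phi c) : ℝ) = m := by linarith
    exact_mod_cast h2
  · rintro rfl
    exact minNorm c

theorem order_phi (c : DualQuot Λ4) : addOrderOf c = addOrderOf (phi c) :=
  (addOrderOf_injective phi.toAddMonoidHom phi_inj c).symm

theorem order_two (g : G4) : addOrderOf g = 2 ↔ g ≠ 0 ∧ g + g = 0 := by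
  rw [addOrderOf_eq_prime_iff, two_nsmul, and_comm]

theorem four_g : ∀ g : G4, 4 • g = 0 := by decide +kernel

theorem order_four (g : G4) : addOrderOf g = 4 ↔ g + g ≠ 0 := by
  constructor
  · intro h h2
    have : addOrderOf g ∣ 2 := addOrderOf_dvd_of_nsmul_eq_zero (by rw [two_nsmul, h2])
    rw [h] at this
    omega
  · intro h
    have := addOrderOf_eq_prime_pow (p := 2) (n := 1) (x := g)
      (by rw [pow_one, two_nsmul]; exact h) (four_g g)
    simpa using this

theorem ncard_phi (P : G4 → Prop) [DecidablePred P] :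
    {c : DualQuot Λ4 | P (phi c)}.ncard =
      (Finset.univ.filter (fun g : G4 => even4 g ∧ P g)).card := by
  rw [← Set.ncard_image_of_injective _ phi_inj, ← Set.ncard_coe_finset]
  congr 1
  ext g
  simp only [Set.mem_image, Set.mem_ofPred_eq, Finset.coe_filter, Finset.mem_univ, true_and]
  constructor
  · rintro ⟨c, hc, rfl⟩
    exact ⟨phi_even c, hc⟩
  · rintro ⟨he, hP⟩
    obtain ⟨x, hx⟩ := exists_rep g he
    have e : phi (Submodule.Quotient.mk x) = g := by rw [phi_mk, hx, (rep4_spec g he).1]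
    exact ⟨_, by rwa [e], e⟩

set_option synthInstance.maxSize 100000 in
set_option synthInstance.maxHeartbeats 1000000 in
theorem classify : ∀ g : G4, even4 g → g = 0 ∨ (min4 g = 2 ∧ g + g ≠ 0) ∨
    (min4 g = 4 ∧ g ≠ 0 ∧ g + g = 0) ∨ (min4 g = 6 ∧ g + g ≠ 0) ∨
    (min4 g = 8 ∧ g ≠ 0 ∧ g + g = 0) := by
  decide +kernel

/-- The quotient `Λ₄♯/Λ₄` has exactly 64 elements: the zero coset, 24 cosets of minimal
norm 1/2 and order 4, 12 cosets of minimal norm 1 and order 2, 24 cosets of minimal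
norm 3/2 and order 4, and 3 cosets of minimal norm 2 and order 2. -/
theorem Λ4_dual_quotient_classes :
    Nat.card (DualQuot Λ4) = 64 ∧
    (∀ c : DualQuot Λ4, c = 0 ∨
      (CosetMinNorm Λ4 c (1/2) ∧ addOrderOf c = 4) ∨
      (CosetMinNorm Λ4 c 1 ∧ addOrderOf c = 2) ∨
      (CosetMinNorm Λ4 c (3/2) ∧ addOrderOf c = 4) ∨
      (CosetMinNorm Λ4 c 2 ∧ addOrderOf c = 2)) ∧
    {c : DualQuot Λ4 | CosetMinNorm Λ4 c (1/2) ∧ addOrderOf c = 4}.ncard = 24 ∧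
    {c : DualQuot Λ4 | CosetMinNorm Λ4 c 1 ∧ addOrderOf c = 2}.ncard = 12 ∧
    {c : DualQuot Λ4 | CosetMinNorm Λ4 c (3/2) ∧ addOrderOf c = 4}.ncard = 24 ∧
    {c : DualQuot Λ4 | CosetMinNorm Λ4 c 2 ∧ addOrderOf c = 2}.ncard = 3 := by
  simp only [minNorm_iff _ 2 (1/2) (by norm_num), minNorm_iff _ 4 1 (by norm_num),
    minNorm_iff _ 6 (3/2) (by norm_num), minNorm_iff _ 8 2 (by norm_num), order_phi,
    order_two, order_four]
  refine ⟨?_, ?_, ?_, ?_, ?_, ?_⟩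
  · have := ncard_phi (fun _ => True)
    rw [Set.ofPred_true, Set.ncard_univ] at this
    rw [this]
    decide +kernel
  · intro c
    rcases classify _ (phi_even c) with h | h
    · exact Or.inl (phi_inj (by rw [h, map_zero]))
    · exact Or.inr h
  · rw [ncard_phi (fun g => min4 g = 2 ∧ g + g ≠ 0)]
    decide +kernel
  · rw [ncard_phi (fun g => min4 g = 4 ∧ g ≠ 0 ∧ g + g = 0)]
    decide +kernel
  · rw [ncard_phi (fun g => min4 g = 6 ∧ g + g ≠ 0)]
    decide +kernel
  · rw [ncard_phi (fun g => min4 g = 8 ∧ g ≠ 0 ∧ g + g = 0)]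
    decide +kernel
end
end

section
/- Let e1,…,e6 be linearly independent vectors in ℝ^6 whose Gram matrix (⟪e_i,e_j⟫) equals 2·G, where G is the matrix with rows (2,−1,0,0,0,0), (−1,2,−1,0,0,0), (0,−1,2,−1,0,−1), (0,0,−1,2,−1,0), (0,0,0,−1,2,0), (0,0,−1,0,0,2), and let Λ6 be the ℤ-span of e1,…,e6. Then every integral lattice L in ℝ^6 with Λ6 ⊆ L is isometric (via a linear isometry of ℝ^6) to one of the six lattices: Λ6; ⟨Λ6, e1/2⟩; ⟨Λ6, (e1+e3)/2⟩; ⟨Λ6, e1/2, e3/2⟩; ⟨Λ6, (e1+e3)/2, (e1+e5)/2⟩; and ⟨Λ6, e1/2, e3/2, e5/2⟩. -/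
noncomputable section

open scoped RealInnerProductSpace

/-- The Gram matrix of `Λ₆` (up to the factor 2). -/
def G6 : Matrix (Fin 6) (Fin 6) ℝ :=
  !![2, -1, 0, 0, 0, 0;
     -1, 2, -1, 0, 0, 0;
     0, -1, 2, -1, 0, -1;
     0, 0, -1, 2, -1, 0;
     0, 0, 0, -1, 2, 0;
     0, 0, -1, 0, 0, 2]


section
set_option synthInstance.maxHeartbeats 1000000
set_option synthInstance.maxSize 100000
set_option maxSynthPendingDepth 20
/-- The bilinear form with matrix `G6` on integer coefficient vectors. -/
def BZ (c d : Fin 6 → ℤ) : ℤ :=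
  c 0 * (2 * d 0 - d 1) + c 1 * (2 * d 1 - d 0 - d 2) + c 2 * (2 * d 2 - d 1 - d 3 - d 5)
    + c 3 * (2 * d 3 - d 2 - d 4) + c 4 * (2 * d 4 - d 3) + c 5 * (2 * d 5 - d 2)

/-- The 0/1 vector attached to a bit mask. -/
def bits (b : ℕ) : Fin 6 → ℤ := fun i => if b.testBit i then 1 else 0

/-- The bit mask of the reduction mod 2 of an integer vector. -/
def enc (c : Fin 6 → ℤ) : ℕ :=
  (c 0 % 2).toNat + 2 * (c 1 % 2).toNat + 4 * (c 2 % 2).toNat + 8 * (c 3 % 2).toNat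
    + 16 * (c 4 % 2).toNat + 32 * (c 5 % 2).toNat

/-- The action of the reflection in the root `r` on bit masks. -/
def TT (r : Fin 6 → ℤ) (b : ℕ) : ℕ := enc (BZ r (bits b) • r - bits b)

/-- Parity of the form on bit masks. -/
def Bm (a b : ℕ) : ℤ := BZ (bits a) (bits b) % 2

/-- Norm mod 4 on bit masks. -/
def Qm (a : ℕ) : ℤ := BZ (bits a) (bits a) % 4

/-- The positive roots. -/
def rts : List (Fin 6 → ℤ) :=
  [![0, 0, 0, 0, 0, 1], ![0, 0, 0, 0, 1, 0], ![0, 0, 0, 1, 0, 0], ![0, 0, 0, 1, 1, 0],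
   ![0, 0, 1, 0, 0, 0], ![0, 0, 1, 0, 0, 1], ![0, 0, 1, 1, 0, 0], ![0, 0, 1, 1, 0, 1],
   ![0, 0, 1, 1, 1, 0], ![0, 0, 1, 1, 1, 1], ![0, 1, 0, 0, 0, 0], ![0, 1, 1, 0, 0, 0],
   ![0, 1, 1, 0, 0, 1], ![0, 1, 1, 1, 0, 0], ![0, 1, 1, 1, 0, 1], ![0, 1, 1, 1, 1, 0],
   ![0, 1, 1, 1, 1, 1], ![0, 1, 2, 1, 0, 1], ![0, 1, 2, 1, 1, 1], ![0, 1, 2, 2, 1, 1],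
   ![1, 0, 0, 0, 0, 0], ![1, 1, 0, 0, 0, 0], ![1, 1, 1, 0, 0, 0], ![1, 1, 1, 0, 0, 1],
   ![1, 1, 1, 1, 0, 0], ![1, 1, 1, 1, 0, 1], ![1, 1, 1, 1, 1, 0], ![1, 1, 1, 1, 1, 1],
   ![1, 1, 2, 1, 0, 1], ![1, 1, 2, 1, 1, 1], ![1, 1, 2, 2, 1, 1], ![1, 2, 2, 1, 0, 1],
   ![1, 2, 2, 1, 1, 1], ![1, 2, 2, 2, 1, 1], ![1, 2, 3, 2, 1, 1], ![1, 2, 3, 2, 1, 2]]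

lemma rts_norm : ∀ r ∈ rts, BZ r r = 2 := by decide +kernel

lemma comb1 : ∀ b < 64, Qm b ≠ 0 → ∃ r ∈ rts, ∃ s ∈ rts, TT r (TT s b) = 1 := by
  decide +kernel

lemma comb2 : ∀ b < 64, b ≠ 0 → b ≠ 1 → Bm b 1 = 0 → ∃ r ∈ rts, TT r 1 = 1 ∧
    ∃ s ∈ rts, TT s 1 = 1 ∧ (TT r (TT s b) = 4 ∨ TT r (TT s b) = 5) := by
  decide +kernel

lemma comb3 : ∀ b < 64, b ≠ 0 → b ≠ 1 → b ≠ 4 → b ≠ 5 → Bm b 1 = 0 → Bm b 4 = 0 →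
    ∃ r ∈ rts, (TT r 1 = 1 ∧ TT r 4 = 4) ∧ ∃ s ∈ rts, (TT s 1 = 1 ∧ TT s 4 = 4) ∧
      (TT r (TT s b) = 16 ∨ TT r (TT s b) = 17 ∨ TT r (TT s b) = 20 ∨ TT r (TT s b) = 21) := by
  decide +kernel

lemma comb4 : ∀ b < 64, Bm b 1 = 0 → Bm b 4 = 0 → Bm b 16 = 0 →
    b = 0 ∨ b = 1 ∨ b = 4 ∨ b = 5 ∨ b = 16 ∨ b = 17 ∨ b = 20 ∨ b = 21 := by
  decide +kernel

lemma comb5 : ∀ b < 64, b ≠ 0 → Qm b = 0 → ∃ r ∈ rts, ∃ s ∈ rts, TT r (TT s b) = 5 := by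
  decide +kernel

lemma comb6 : ∀ b < 64, b ≠ 0 → b ≠ 5 → Qm b = 0 → Bm b 5 = 0 → ∃ r ∈ rts, TT r 5 = 5 ∧
    ∃ s ∈ rts, TT s 5 = 5 ∧ (TT r (TT s b) = 17 ∨ TT r (TT s b) = 20) := by
  decide +kernel

lemma comb7 : ∀ b < 64, Bm b 5 = 0 → Bm b 17 = 0 → Qm b = 0 → Qm (b ^^^ 5) = 0 →
    Qm (b ^^^ 17) = 0 → Qm (b ^^^ 20) = 0 → b = 0 ∨ b = 5 ∨ b = 17 ∨ b = 20 := by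
  decide +kernel

lemma enc_aux : ∀ n0 < 2, ∀ n1 < 2, ∀ n2 < 2, ∀ n3 < 2, ∀ n4 < 2, ∀ n5 < 2,
    n0 + 2 * n1 + 4 * n2 + 8 * n3 + 16 * n4 + 32 * n5 < 64 ∧
    bits (n0 + 2 * n1 + 4 * n2 + 8 * n3 + 16 * n4 + 32 * n5) =
      ![(n0 : ℤ), (n1 : ℤ), (n2 : ℤ), (n3 : ℤ), (n4 : ℤ), (n5 : ℤ)] := by
  decide +kernel

lemma enc_lt (c : Fin 6 → ℤ) : enc c < 64 := by
  unfold enc; omega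

lemma bits_enc (c : Fin 6 → ℤ) (i : Fin 6) : bits (enc c) i = c i % 2 := by
  have h := (enc_aux (c 0 % 2).toNat (by omega) (c 1 % 2).toNat (by omega) (c 2 % 2).toNat
    (by omega) (c 3 % 2).toNat (by omega) (c 4 % 2).toNat (by omega) (c 5 % 2).toNat
    (by omega)).2
  unfold enc
  rw [h]
  fin_cases i <;> simp <;> omega

lemma bits_xor (a b : ℕ) (i : Fin 6) : (bits (a ^^^ b) i - (bits a i + bits b i)) % 2 = 0 := by
  unfold bits
  rw [Nat.testBit_xor]
  cases a.testBit i <;> cases b.testBit i <;> simp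

end

/-- The half-integral combination `½ ∑ c i • e i`. -/
def hv (e : Fin 6 → E 6) (c : Fin 6 → ℤ) : E 6 := ∑ i, ((c i : ℝ) / 2) • e i

lemma hv_add (e : Fin 6 → E 6) (c d : Fin 6 → ℤ) : hv e (c + d) = hv e c + hv e d := by
  unfold hv
  rw [← Finset.sum_add_distrib]
  refine Finset.sum_congr rfl fun i _ => ?_
  rw [← add_smul]; congr 1; push_cast [Pi.add_apply]; ring

lemma hv_smul (e : Fin 6 → E 6) (k : ℤ) (c : Fin 6 → ℤ) :
    hv e (k • c) = (k : ℝ) • hv e c := by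
  unfold hv
  rw [Finset.smul_sum]
  refine Finset.sum_congr rfl fun i _ => ?_
  rw [smul_smul]; congr 1; push_cast [Pi.smul_apply, smul_eq_mul]; ring

lemma hv_sub (e : Fin 6 → E 6) (c d : Fin 6 → ℤ) : hv e (c - d) = hv e c - hv e d := by
  unfold hv
  rw [← Finset.sum_sub_distrib]
  refine Finset.sum_congr rfl fun i _ => ?_
  rw [← sub_smul]; congr 1; push_cast [Pi.sub_apply]; ring

lemma hv_two_mem (e : Fin 6 → E 6) (c : Fin 6 → ℤ) :
    hv e (2 • c) ∈ Submodule.span ℤ (Set.range e) := by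
  unfold hv
  refine Submodule.sum_mem _ fun i _ => ?_
  have : (((2 • c) i : ℤ) : ℝ) / 2 = ((c i : ℤ) : ℝ) := by
    simp
  rw [this, Int.cast_smul_eq_zsmul]
  exact Submodule.smul_mem _ _ (Submodule.subset_span ⟨i, rfl⟩)

lemma mem_span_hv (e : Fin 6 → E 6) (x : E 6) (hx : x ∈ Submodule.span ℤ (Set.range e)) :
    ∃ c, x = hv e (2 • c) := by
  obtain ⟨c, rfl⟩ := (Submodule.mem_span_range_iff_exists_fun ℤ).1 hx
  refine ⟨c, ?_⟩
  unfold hv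
  refine Finset.sum_congr rfl fun i _ => ?_
  have : (((2 • c) i : ℤ) : ℝ) / 2 = ((c i : ℤ) : ℝ) := by
    simp
  rw [this, Int.cast_smul_eq_zsmul]

lemma inner_real (e : Fin 6 → E 6) (hGram : ∀ i j, ⟪e i, e j⟫ = 2 * G6 i j) (x y : Fin 6 → ℝ) :
    ⟪∑ i, x i • e i, ∑ i, y i • e i⟫ =
    2 * (x 0 * (2 * y 0 - y 1) + x 1 * (2 * y 1 - y 0 - y 2) + x 2 * (2 * y 2 - y 1 - y 3 - y 5)
    + x 3 * (2 * y 3 - y 2 - y 4) + x 4 * (2 * y 4 - y 3) + x 5 * (2 * y 5 - y 2)) := by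
  simp only [sum_inner, inner_sum, real_inner_smul_left, real_inner_smul_right, hGram]
  simp [Fin.sum_univ_six, G6]
  ring

lemma inner_hv (e : Fin 6 → E 6) (hGram : ∀ i j, ⟪e i, e j⟫ = 2 * G6 i j) (c d : Fin 6 → ℤ) :
    ⟪hv e c, hv e d⟫ = (BZ c d : ℝ) / 2 := by
  unfold hv BZ
  rw [inner_real e hGram]
  push_cast
  ring

/-- Admissible lattices. -/
def Adm (e : Fin 6 → E 6) (L : Submodule ℤ (E 6)) : Prop :=
  LatticeIsIntegral L ∧ Submodule.span ℤ (Set.range e) ≤ L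

/-- Congruence mod 2 does not change membership. -/
lemma hv_congr {e : Fin 6 → E 6} {L : Submodule ℤ (E 6)}
    (hΛ : Submodule.span ℤ (Set.range e) ≤ L) {c d : Fin 6 → ℤ}
    (h : ∀ i, (c i - d i) % 2 = 0) (hd : hv e d ∈ L) : hv e c ∈ L := by
  have : c = d + 2 • (fun i => (c i - d i) / 2) := by
    ext i
    have := h i
    simp
    omega
  rw [this, hv_add]
  exact L.add_mem hd (hΛ (hv_two_mem e _))

/-- Membership of a bit mask. -/
def InL (e : Fin 6 → E 6) (L : Submodule ℤ (E 6)) (b : ℕ) : Prop := hv e (bits b) ∈ L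

lemma InL_xor {e : Fin 6 → E 6} {L : Submodule ℤ (E 6)} (hA : Adm e L) {a b c : ℕ}
    (ha : InL e L a) (hb : InL e L b) (habc : a ^^^ b = c) : InL e L c := by
  rw [← habc]
  refine hv_congr hA.2 (d := bits a + bits b) (fun i => bits_xor a b i) ?_
  rw [hv_add]
  exact L.add_mem ha hb

lemma InL_enc {e : Fin 6 → E 6} {L : Submodule ℤ (E 6)} (hA : Adm e L) {c : Fin 6 → ℤ}
    (h : hv e c ∈ L) : InL e L (enc c) := by
  refine hv_congr hA.2 (d := c) (fun i => ?_) h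
  rw [bits_enc]; omega

lemma InL_enc' {e : Fin 6 → E 6} {L : Submodule ℤ (E 6)}
    (hΛ : Submodule.span ℤ (Set.range e) ≤ L) {c : Fin 6 → ℤ}
    (h : InL e L (enc c)) : hv e c ∈ L := by
  refine hv_congr hΛ (d := bits (enc c)) (fun i => ?_) h
  rw [bits_enc]; omega

lemma InL_Bm {e : Fin 6 → E 6} (hGram : ∀ i j, ⟪e i, e j⟫ = 2 * G6 i j)
    {L : Submodule ℤ (E 6)} (hA : Adm e L) {a b : ℕ}
    (ha : InL e L a) (hb : InL e L b) : Bm a b = 0 := by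
  obtain ⟨k, hk⟩ := hA.1 _ ha _ hb
  rw [inner_hv e hGram] at hk
  have : BZ (bits a) (bits b) = 2 * k := by
    have : (BZ (bits a) (bits b) : ℝ) = ((2 * k : ℤ) : ℝ) := by push_cast; linarith
    exact_mod_cast this
  unfold Bm
  omega

lemma IsometricLattices.trans' {n : ℕ} {L M N : Submodule ℤ (E n)}
    (h1 : IsometricLattices L M) (h2 : IsometricLattices M N) : IsometricLattices L N := by
  obtain ⟨g, hg⟩ := h1
  obtain ⟨k, hk⟩ := h2
  refine ⟨g.trans k, ?_⟩
  rw [← hk, ← hg, Set.image_image]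
  rfl

lemma IsometricLattices.refl' {n : ℕ} (L : Submodule ℤ (E n)) : IsometricLattices L L :=
  ⟨LinearIsometryEquiv.refl ℝ _, by simp⟩

/-- One reflection. -/
lemma reflect {e : Fin 6 → E 6} (hGram : ∀ i j, ⟪e i, e j⟫ = 2 * G6 i j)
    {L : Submodule ℤ (E 6)} (hA : Adm e L) {r : Fin 6 → ℤ} (hr : r ∈ rts) :
    ∃ L', IsometricLattices L L' ∧ Adm e L' ∧ ∀ b, InL e L b → InL e L' (TT r b) := by
  have hr2 := rts_norm r hr
  set v : E 6 := hv e ((2 : ℤ) • r) with hv'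
  have hvv : v = (2 : ℝ) • hv e r := by rw [hv', hv_smul]; norm_num
  let g : E 6 ≃ₗᵢ[ℝ] E 6 := (Submodule.span ℝ {v}).reflection
  have hnorm : ‖v‖ ^ 2 = 4 := by
    rw [← real_inner_self_eq_norm_sq, hvv, real_inner_smul_left, real_inner_smul_right,
      inner_hv e hGram, hr2]
    norm_num
  have hg : ∀ c, g (hv e c) = hv e (BZ r c • r - c) := by
    intro c
    have : g (hv e c) = 2 • (⟪v, hv e c⟫ / ‖v‖ ^ 2) • v - hv e c := by
      simpa using Submodule.reflection_singleton_apply (𝕜 := ℝ) v (hv e c)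
    rw [this, hnorm, hv_sub, hv_smul, hvv, real_inner_smul_left, inner_hv e hGram,
      two_nsmul, ← add_smul, smul_smul]
    congr 2
    ring
  have hgg : ∀ x, g (g x) = x := fun x => Submodule.reflection_reflection _ x
  let L' : Submodule ℤ (E 6) := L.map (g.toLinearEquiv.toLinearMap.restrictScalars ℤ)
  have hmem : ∀ x ∈ L, g x ∈ L' := fun x hx => ⟨x, hx, rfl⟩
  have hA' : Adm e L' := by
    constructor
    · rintro _ ⟨x, hx, rfl⟩ _ ⟨y, hy, rfl⟩
      obtain ⟨k, hk⟩ := hA.1 x hx y hy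
      exact ⟨k, by rw [← hk]; exact g.inner_map_map x y⟩
    · intro x hx
      rw [← hgg x]
      refine hmem _ (hA.2 ?_)
      obtain ⟨c, rfl⟩ := mem_span_hv e x hx
      rw [hg]
      have : BZ r (2 • c) • r - 2 • c = 2 • (BZ r c • r - c) := by
        ext i; simp [BZ]; ring
      rw [this]
      exact hv_two_mem e _
  refine ⟨L', ⟨g, rfl⟩, hA', fun b hb => ?_⟩
  refine InL_enc hA' ?_
  rw [← hg]
  exact hmem _ hb

/-- Two reflections. -/
lemma reflect2 {e : Fin 6 → E 6} (hGram : ∀ i j, ⟪e i, e j⟫ = 2 * G6 i j)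
    {L : Submodule ℤ (E 6)} (hA : Adm e L) {r s : Fin 6 → ℤ} (hr : r ∈ rts) (hs : s ∈ rts) :
    ∃ L', IsometricLattices L L' ∧ Adm e L' ∧ ∀ b, InL e L b → InL e L' (TT r (TT s b)) := by
  obtain ⟨L1, h1, h2, h3⟩ := reflect hGram hA hs
  obtain ⟨L2, h4, h5, h6⟩ := reflect hGram h2 hr
  exact ⟨L2, h1.trans' h4, h5, fun b hb => h6 _ (h3 _ hb)⟩

/-- An integral lattice containing `Λ₆` lies in `½ Λ₆`. -/
lemma half_mem {e : Fin 6 → E 6} (he : LinearIndependent ℝ e)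
    (hGram : ∀ i j, ⟪e i, e j⟫ = 2 * G6 i j)
    {L : Submodule ℤ (E 6)} (hA : Adm e L) {x : E 6} (hx : x ∈ L) : ∃ c, x = hv e c := by
  have hspan : x ∈ Submodule.span ℝ (Set.range e) := by
    rw [he.span_eq_top_of_card_eq_finrank' (by simp)]; trivial
  obtain ⟨y, rfl⟩ := (Submodule.mem_span_range_iff_exists_fun ℝ).1 hspan
  have hk : ∀ j, ∃ k : ℤ, ⟪∑ i, y i • e i, e j⟫ = (k : ℝ) := fun j =>
    hA.1 _ hx _ (hA.2 (Submodule.subset_span ⟨j, rfl⟩))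
  choose k hk using hk
  have hk' : ∀ j, ∑ i, y i * (2 * G6 i j) = (k j : ℝ) := by
    intro j
    rw [← hk j, sum_inner]
    refine Finset.sum_congr rfl fun i _ => ?_
    rw [real_inner_smul_left, hGram]
  obtain ⟨N, hN⟩ := hA.1 _ hx _ hx
  rw [inner_real e hGram] at hN
  have h0 := hk' 0
  have h1 := hk' 1
  have h2 := hk' 2
  have h3 := hk' 3
  have h4 := hk' 4
  have h5 := hk' 5
  simp [Fin.sum_univ_six, G6] at h0 h1 h2 h3 h4 h5
  have m0 : 6 * y 0 = 4 * k 0 + 5 * k 1 + 6 * k 2 + 4 * k 3 + 2 * k 4 + 3 * k 5 := by linarith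
  have m1 : 6 * y 1 = 5 * k 0 + 10 * k 1 + 12 * k 2 + 8 * k 3 + 4 * k 4 + 6 * k 5 := by linarith
  have m2 : 6 * y 2 = 6 * k 0 + 12 * k 1 + 18 * k 2 + 12 * k 3 + 6 * k 4 + 9 * k 5 := by linarith
  have m3 : 6 * y 3 = 4 * k 0 + 8 * k 1 + 12 * k 2 + 10 * k 3 + 5 * k 4 + 6 * k 5 := by linarith
  have m4 : 6 * y 4 = 2 * k 0 + 4 * k 1 + 6 * k 2 + 5 * k 3 + 4 * k 4 + 3 * k 5 := by linarith
  have m5 : 6 * y 5 = 3 * k 0 + 6 * k 1 + 9 * k 2 + 6 * k 3 + 3 * k 4 + 6 * k 5 := by linarith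
  have hN1 : (N : ℝ) = y 0 * k 0 + y 1 * k 1 + y 2 * k 2 + y 3 * k 3 + y 4 * k 4 + y 5 * k 5 := by
    rw [← hN, ← h0, ← h1, ← h2, ← h3, ← h4, ← h5]; ring
  have hN2 : 6 * N = (4 * k 0 + 5 * k 1 + 6 * k 2 + 4 * k 3 + 2 * k 4 + 3 * k 5) * k 0
      + (5 * k 0 + 10 * k 1 + 12 * k 2 + 8 * k 3 + 4 * k 4 + 6 * k 5) * k 1
      + (6 * k 0 + 12 * k 1 + 18 * k 2 + 12 * k 3 + 6 * k 4 + 9 * k 5) * k 2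
      + (4 * k 0 + 8 * k 1 + 12 * k 2 + 10 * k 3 + 5 * k 4 + 6 * k 5) * k 3
      + (2 * k 0 + 4 * k 1 + 6 * k 2 + 5 * k 3 + 4 * k 4 + 3 * k 5) * k 4
      + (3 * k 0 + 6 * k 1 + 9 * k 2 + 6 * k 3 + 3 * k 4 + 6 * k 5) * k 5 := by
    have : (6 : ℝ) * N = (4 * k 0 + 5 * k 1 + 6 * k 2 + 4 * k 3 + 2 * k 4 + 3 * k 5) * k 0
      + (5 * k 0 + 10 * k 1 + 12 * k 2 + 8 * k 3 + 4 * k 4 + 6 * k 5) * k 1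
      + (6 * k 0 + 12 * k 1 + 18 * k 2 + 12 * k 3 + 6 * k 4 + 9 * k 5) * k 2
      + (4 * k 0 + 8 * k 1 + 12 * k 2 + 10 * k 3 + 5 * k 4 + 6 * k 5) * k 3
      + (2 * k 0 + 4 * k 1 + 6 * k 2 + 5 * k 3 + 4 * k 4 + 3 * k 5) * k 4
      + (3 * k 0 + 6 * k 1 + 9 * k 2 + 6 * k 3 + 3 * k 4 + 6 * k 5) * k 5 := by
      rw [hN1, ← m0, ← m1, ← m2, ← m3, ← m4, ← m5]; ring
    exact_mod_cast this
  have h3t : (3 : ℤ) ∣ (k 0 + 2 * k 1 + k 3 + 2 * k 4) ^ 2 := by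
    refine ⟨2 * N - (k 0 ^ 2 + 2 * k 0 * k 1 + 4 * k 0 * k 2 + 2 * k 0 * k 3 + 2 * k 0 * k 5
      + 2 * k 1 ^ 2 + 8 * k 1 * k 2 + 4 * k 1 * k 3 + 4 * k 1 * k 5 + 6 * k 2 ^ 2
      + 8 * k 2 * k 3 + 4 * k 2 * k 4 + 6 * k 2 * k 5 + 3 * k 3 ^ 2 + 2 * k 3 * k 4
      + 4 * k 3 * k 5 + 2 * k 4 * k 5 + 2 * k 5 ^ 2), ?_⟩
    linear_combination -hN2
  obtain ⟨t, ht⟩ := Int.Prime.dvd_pow' Nat.prime_three h3t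
  push_cast at ht
  have aux : ∀ (z : ℝ) (m : ℤ), 6 * z = m → m % 3 = 0 → z = ((m / 3 : ℤ) : ℝ) / 2 := by
    intro z m hz hm
    have : m = 3 * (m / 3) := by omega
    rw [this] at hz
    push_cast at hz
    linarith
  have a0 := aux (y 0) (4 * k 0 + 5 * k 1 + 6 * k 2 + 4 * k 3 + 2 * k 4 + 3 * k 5)
    (by push_cast; exact m0) (by omega)
  have a1 := aux (y 1) (5 * k 0 + 10 * k 1 + 12 * k 2 + 8 * k 3 + 4 * k 4 + 6 * k 5)
    (by push_cast; exact m1) (by omega)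
  have a2 := aux (y 2) (6 * k 0 + 12 * k 1 + 18 * k 2 + 12 * k 3 + 6 * k 4 + 9 * k 5)
    (by push_cast; exact m2) (by omega)
  have a3 := aux (y 3) (4 * k 0 + 8 * k 1 + 12 * k 2 + 10 * k 3 + 5 * k 4 + 6 * k 5)
    (by push_cast; exact m3) (by omega)
  have a4 := aux (y 4) (2 * k 0 + 4 * k 1 + 6 * k 2 + 5 * k 3 + 4 * k 4 + 3 * k 5)
    (by push_cast; exact m4) (by omega)
  have a5 := aux (y 5) (3 * k 0 + 6 * k 1 + 9 * k 2 + 6 * k 3 + 3 * k 4 + 6 * k 5)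
    (by push_cast; exact m5) (by omega)
  have hy : ∀ i, ∃ c : ℤ, y i = (c : ℝ) / 2 := by
    intro i
    fin_cases i
    exacts [⟨_, a0⟩, ⟨_, a1⟩, ⟨_, a2⟩, ⟨_, a3⟩, ⟨_, a4⟩, ⟨_, a5⟩]
  choose c hc using hy
  exact ⟨c, by simp only [hv, hc]⟩

/-- A lattice is recovered from its bit masks. -/
lemma eq_of_masks {e : Fin 6 → E 6} (he : LinearIndependent ℝ e)
    (hGram : ∀ i j, ⟪e i, e j⟫ = 2 * G6 i j) {L : Submodule ℤ (E 6)} (hA : Adm e L)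
    (S : Set (E 6)) (hS : S ⊆ L)
    (h : ∀ b < 64, InL e L b →
      InL e (Submodule.span ℤ (Set.range e) ⊔ Submodule.span ℤ S) b) :
    L = Submodule.span ℤ (Set.range e) ⊔ Submodule.span ℤ S := by
  refine le_antisymm (fun x hx => ?_) (sup_le hA.2 (Submodule.span_le.2 hS))
  obtain ⟨c, rfl⟩ := half_mem he hGram hA hx
  exact InL_enc' le_sup_left (h _ (enc_lt c) (InL_enc hA hx))

lemma hv_bits (e : Fin 6 → E 6) : hv e (bits 0) = 0 ∧ hv e (bits 1) = (2 : ℝ)⁻¹ • e 0 ∧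
    hv e (bits 4) = (2 : ℝ)⁻¹ • e 2 ∧ hv e (bits 16) = (2 : ℝ)⁻¹ • e 4 ∧
    hv e (bits 5) = (2 : ℝ)⁻¹ • (e 0 + e 2) ∧ hv e (bits 17) = (2 : ℝ)⁻¹ • (e 0 + e 4) ∧
    hv e (bits 20) = (2 : ℝ)⁻¹ • (e 2 + e 4) ∧
    hv e (bits 21) = (2 : ℝ)⁻¹ • (e 0 + e 2 + e 4) := by
  refine ⟨?_, ?_, ?_, ?_, ?_, ?_, ?_, ?_⟩ <;>
    simp [hv, bits, Fin.sum_univ_six, Nat.testBit, Nat.shiftRight_eq_div_pow]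

set_option maxHeartbeats 1000000 in
/-- If `e1, …, e6` are linearly independent with Gram matrix `2·G6`, and `Λ₆` is their
ℤ-span (the laminated lattice `≅ √2·E₆`), then every integral lattice in `ℝ⁶`
containing `Λ₆` is isometric to one of six lattices. -/
theorem integral_lattices_containing_Λ6 (e : Fin 6 → E 6)
    (he : LinearIndependent ℝ e)
    (hGram : ∀ i j, ⟪e i, e j⟫ = 2 * G6 i j)
    (L : Submodule ℤ (E 6)) (hL : LatticeIsIntegral L)
    (hΛ : Submodule.span ℤ (Set.range e) ≤ L) :
    IsometricLattices L (Submodule.span ℤ (Set.range e)) ∨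
    IsometricLattices L (Submodule.span ℤ (Set.range e) ⊔
      Submodule.span ℤ {(2 : ℝ)⁻¹ • e 0}) ∨
    IsometricLattices L (Submodule.span ℤ (Set.range e) ⊔
      Submodule.span ℤ {(2 : ℝ)⁻¹ • (e 0 + e 2)}) ∨
    IsometricLattices L (Submodule.span ℤ (Set.range e) ⊔
      Submodule.span ℤ {(2 : ℝ)⁻¹ • e 0, (2 : ℝ)⁻¹ • e 2}) ∨
    IsometricLattices L (Submodule.span ℤ (Set.range e) ⊔
      Submodule.span ℤ {(2 : ℝ)⁻¹ • (e 0 + e 2), (2 : ℝ)⁻¹ • (e 0 + e 4)}) ∨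
    IsometricLattices L (Submodule.span ℤ (Set.range e) ⊔
      Submodule.span ℤ {(2 : ℝ)⁻¹ • e 0, (2 : ℝ)⁻¹ • e 2, (2 : ℝ)⁻¹ • e 4}) := by
  have hA : Adm e L := ⟨hL, hΛ⟩
  obtain ⟨b0, b1, b4, b16, b5, b17, b20, b21⟩ := hv_bits e
  have fin : ∀ (L' : Submodule ℤ (E 6)) (S : Set (E 6)), IsometricLattices L L' → Adm e L' →
      S ⊆ L' → (∀ b < 64, InL e L' b →
        InL e (Submodule.span ℤ (Set.range e) ⊔ Submodule.span ℤ S) b) →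
      IsometricLattices L (Submodule.span ℤ (Set.range e) ⊔ Submodule.span ℤ S) := by
    intro L' S h1 h2 h3 h4
    rw [← eq_of_masks he hGram h2 S h3 h4]
    exact h1
  have inz : ∀ M : Submodule ℤ (E 6), InL e M 0 := fun M => by
    unfold InL; rw [b0]; exact M.zero_mem
  have admS : ∀ S : Set (E 6), ∀ x ∈ S,
      x ∈ Submodule.span ℤ (Set.range e) ⊔ Submodule.span ℤ S := fun S x hx =>
    Submodule.mem_sup_right (Submodule.subset_span hx)
  have xorS : ∀ (S : Set (E 6)) (a b c : ℕ), a ^^^ b = c →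
      InL e (Submodule.span ℤ (Set.range e) ⊔ Submodule.span ℤ S) a →
      InL e (Submodule.span ℤ (Set.range e) ⊔ Submodule.span ℤ S) b →
      InL e (Submodule.span ℤ (Set.range e) ⊔ Submodule.span ℤ S) c := by
    intro S a b c habc ha hb
    rw [← habc]
    refine hv_congr le_sup_left (d := bits a + bits b) (fun i => bits_xor a b i) ?_
    rw [hv_add]
    exact Submodule.add_mem _ ha hb
  by_cases hodd : ∃ L' b, IsometricLattices L L' ∧ Adm e L' ∧ b < 64 ∧ InL e L' b ∧ Qm b ≠ 0
  · obtain ⟨L0, b, hi0, hA0, hb, hbL, hq⟩ := hodd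
    obtain ⟨r, hr, s, hs, hrs⟩ := comb1 b hb hq
    obtain ⟨L1, hi1, hA1, hm1⟩ := reflect2 hGram hA0 hr hs
    have hI1 := hi0.trans' hi1
    have h1 : InL e L1 1 := hrs ▸ hm1 b hbL
    clear hm1 hi1 hrs hbL hq hb b
    by_cases hx : ∃ b, b < 64 ∧ InL e L1 b ∧ b ≠ 0 ∧ b ≠ 1
    swap
    · push Not at hx
      right; left
      refine fin L1 _ hI1 hA1 ?_ ?_
      · rw [← b1]; rintro x rfl; exact h1
      · intro b hb hbL
        by_cases hb0 : b = 0
        · subst hb0; exact inz _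
        · have := hx b hb hbL hb0
          subst this
          unfold InL; rw [b1]; exact admS _ _ (by simp)
    obtain ⟨b, hb, hbL, hn0, hn1⟩ := hx
    obtain ⟨r, hr, hr1, s, hs, hs1, hrs⟩ := comb2 b hb hn0 hn1 (InL_Bm hGram hA1 hbL h1)
    obtain ⟨L2, hi2, hA2, hm2⟩ := reflect2 hGram hA1 hr hs
    have hI2 := hI1.trans' hi2
    have g1 : InL e L2 1 := by have := hm2 1 h1; rwa [hs1, hr1] at this
    have g4 : InL e L2 4 := by
      have := hm2 b hbL
      rcases hrs with h | h
      · rwa [h] at this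
      · rw [h] at this; exact InL_xor hA2 this g1 (by decide)
    clear hm2 hi2 hrs hbL hb hn0 hn1 b
    by_cases hx : ∃ b, b < 64 ∧ InL e L2 b ∧ b ≠ 0 ∧ b ≠ 1 ∧ b ≠ 4 ∧ b ≠ 5
    swap
    · push Not at hx
      right; right; right; left
      refine fin L2 _ hI2 hA2 ?_ ?_
      · rw [← b1, ← b4]; rintro x (rfl | rfl)
        exacts [g1, g4]
      · intro b hb hbL
        have k1 : InL e (Submodule.span ℤ (Set.range e) ⊔
          Submodule.span ℤ {(2 : ℝ)⁻¹ • e 0, (2 : ℝ)⁻¹ • e 2}) 1 := by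
          unfold InL; rw [b1]; exact admS _ _ (by simp)
        have k4 : InL e (Submodule.span ℤ (Set.range e) ⊔
          Submodule.span ℤ {(2 : ℝ)⁻¹ • e 0, (2 : ℝ)⁻¹ • e 2}) 4 := by
          unfold InL; rw [b4]; exact admS _ _ (by simp)
        by_cases hb0 : b = 0
        · subst hb0; exact inz _
        by_cases hb1 : b = 1
        · subst hb1; exact k1
        by_cases hb4 : b = 4
        · subst hb4; exact k4
        have := hx b hb hbL hb0 hb1 hb4
        subst this
        exact xorS _ 1 4 5 (by decide) k1 k4
    obtain ⟨b, hb, hbL, hn0, hn1, hn4, hn5⟩ := hx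
    obtain ⟨r, hr, ⟨hr1, hr4⟩, s, hs, ⟨hs1, hs4⟩, hrs⟩ := comb3 b hb hn0 hn1 hn4 hn5
      (InL_Bm hGram hA2 hbL g1) (InL_Bm hGram hA2 hbL g4)
    obtain ⟨L3, hi3, hA3, hm3⟩ := reflect2 hGram hA2 hr hs
    have hI3 := hI2.trans' hi3
    have f1 : InL e L3 1 := by have := hm3 1 g1; rwa [hs1, hr1] at this
    have f4 : InL e L3 4 := by have := hm3 4 g4; rwa [hs4, hr4] at this
    have f5 : InL e L3 5 := InL_xor hA3 f1 f4 (by decide)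
    have f16 : InL e L3 16 := by
      have := hm3 b hbL
      rcases hrs with h | h | h | h <;> rw [h] at this
      · exact this
      · exact InL_xor hA3 this f1 (by decide)
      · exact InL_xor hA3 this f4 (by decide)
      · exact InL_xor hA3 this f5 (by decide)
    right; right; right; right; right
    refine fin L3 _ hI3 hA3 ?_ ?_
    · rw [← b1, ← b4, ← b16]; rintro x (rfl | rfl | rfl)
      exacts [f1, f4, f16]
    · intro b hb hbL
      have k1 : InL e (Submodule.span ℤ (Set.range e) ⊔
        Submodule.span ℤ {(2 : ℝ)⁻¹ • e 0, (2 : ℝ)⁻¹ • e 2, (2 : ℝ)⁻¹ • e 4}) 1 := by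
        unfold InL; rw [b1]; exact admS _ _ (by simp)
      have k4 : InL e (Submodule.span ℤ (Set.range e) ⊔
        Submodule.span ℤ {(2 : ℝ)⁻¹ • e 0, (2 : ℝ)⁻¹ • e 2, (2 : ℝ)⁻¹ • e 4}) 4 := by
        unfold InL; rw [b4]; exact admS _ _ (by simp)
      have k16 : InL e (Submodule.span ℤ (Set.range e) ⊔
        Submodule.span ℤ {(2 : ℝ)⁻¹ • e 0, (2 : ℝ)⁻¹ • e 2, (2 : ℝ)⁻¹ • e 4}) 16 := by
        unfold InL; rw [b16]; exact admS _ _ (by simp)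
      rcases comb4 b hb (InL_Bm hGram hA3 hbL f1) (InL_Bm hGram hA3 hbL f4)
        (InL_Bm hGram hA3 hbL f16) with h | h | h | h | h | h | h | h <;> subst h
      · exact inz _
      · exact k1
      · exact k4
      · exact xorS _ 1 4 5 (by decide) k1 k4
      · exact k16
      · exact xorS _ 1 16 17 (by decide) k1 k16
      · exact xorS _ 4 16 20 (by decide) k4 k16
      · exact xorS _ 5 16 21 (by decide) (xorS _ 1 4 5 (by decide) k1 k4) k16
  · have hev : ∀ L' b, IsometricLattices L L' → Adm e L' → b < 64 → InL e L' b → Qm b = 0 := by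
      intro L' b h1 h2 h3 h4
      by_contra h
      exact hodd ⟨L', b, h1, h2, h3, h4, h⟩
    by_cases hx : ∃ b, b < 64 ∧ InL e L b ∧ b ≠ 0
    swap
    · push Not at hx
      left
      have := fin L ∅ (IsometricLattices.refl' L) hA (by simp) (fun b hb hbL => by
        have := hx b hb hbL
        subst this
        exact inz _)
      simpa using this
    obtain ⟨b, hb, hbL, hn0⟩ := hx
    obtain ⟨r, hr, s, hs, hrs⟩ := comb5 b hb hn0 (hev L b (IsometricLattices.refl' L) hA hb hbL)
    obtain ⟨L1, hI1, hA1, hm1⟩ := reflect2 hGram hA hr hs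
    have h5 : InL e L1 5 := hrs ▸ hm1 b hbL
    clear hm1 hrs hbL hn0 hb b
    by_cases hx : ∃ b, b < 64 ∧ InL e L1 b ∧ b ≠ 0 ∧ b ≠ 5
    swap
    · push Not at hx
      right; right; left
      refine fin L1 _ hI1 hA1 ?_ ?_
      · rw [← b5]; rintro x rfl; exact h5
      · intro b hb hbL
        by_cases hb0 : b = 0
        · subst hb0; exact inz _
        · have := hx b hb hbL hb0
          subst this
          unfold InL; rw [b5]; exact admS _ _ (by simp)
    obtain ⟨b, hb, hbL, hn0, hn5⟩ := hx
    obtain ⟨r, hr, hr5, s, hs, hs5, hrs⟩ := comb6 b hb hn0 hn5 (hev L1 b hI1 hA1 hb hbL)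
      (InL_Bm hGram hA1 hbL h5)
    obtain ⟨L2, hi2, hA2, hm2⟩ := reflect2 hGram hA1 hr hs
    have hI2 := hI1.trans' hi2
    have g5 : InL e L2 5 := by have := hm2 5 h5; rwa [hs5, hr5] at this
    have g17 : InL e L2 17 := by
      have := hm2 b hbL
      rcases hrs with h | h
      · rwa [h] at this
      · rw [h] at this; exact InL_xor hA2 this g5 (by decide)
    have g20 : InL e L2 20 := InL_xor hA2 g5 g17 (by decide)
    right; right; right; right; left
    refine fin L2 _ hI2 hA2 ?_ ?_
    · rw [← b5, ← b17]; rintro x (rfl | rfl)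
      exacts [g5, g17]
    · intro b hb hbL
      have k5 : InL e (Submodule.span ℤ (Set.range e) ⊔
        Submodule.span ℤ {(2 : ℝ)⁻¹ • (e 0 + e 2), (2 : ℝ)⁻¹ • (e 0 + e 4)}) 5 := by
        unfold InL; rw [b5]; exact admS _ _ (by simp)
      have k17 : InL e (Submodule.span ℤ (Set.range e) ⊔
        Submodule.span ℤ {(2 : ℝ)⁻¹ • (e 0 + e 2), (2 : ℝ)⁻¹ • (e 0 + e 4)}) 17 := by
        unfold InL; rw [b17]; exact admS _ _ (by simp)
      have q : ∀ a < 64, InL e L2 a → Qm (b ^^^ a) = 0 := fun a ha haL =>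
        hev L2 _ hI2 hA2 (Nat.xor_lt_two_pow (n := 6) hb ha) (InL_xor hA2 hbL haL rfl)
      rcases comb7 b hb (InL_Bm hGram hA2 hbL g5) (InL_Bm hGram hA2 hbL g17)
        (hev L2 b hI2 hA2 hb hbL) (q 5 (by norm_num) g5) (q 17 (by norm_num) g17)
        (q 20 (by norm_num) g20) with h | h | h | h <;> subst h
      · exact inz _
      · exact k5
      · exact k17
      · exact xorS _ 5 17 20 (by decide) k5 k17
end
end

section
/- Let e1,…,e6 be linearly independent vectors in ℝ^6 whose Gram matrix (⟪e_i,e_j⟫) equals 2·G, where G is the matrix with rows (2,−1,0,0,0,0), (−1,2,−1,0,0,0), (0,−1,2,−1,0,−1), (0,0,−1,2,−1,0), (0,0,0,−1,2,0), (0,0,−1,0,0,2), and let Λ6 be the ℤ-span of e1,…,e6. Then the quotient group Λ6♯/Λ6 has exactly 192 elements, consisting of: the zero coset; exactly 54 cosets of minimal norm 2/3, each of order 6; exactly 36 cosets of minimal norm 1, each of order 2; exactly 72 cosets of minimal norm 5/3, each of order 6; exactly 27 cosets of minimal norm 2, each of order 2; and exactly 2 cosets of minimal norm 8/3, each of order 3.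 Here the minimal norm of a coset is the minimum of ‖x‖² over x in the coset. -/
noncomputable section

open scoped RealInnerProductSpace

/-- `3 G⁻¹ k`. -/
def bb (k : Fin 6 → ℤ) : Fin 6 → ℤ :=
  ![4 * k 0 + 5 * k 1 + 6 * k 2 + 4 * k 3 + 2 * k 4 + 3 * k 5,
    5 * k 0 + 10 * k 1 + 12 * k 2 + 8 * k 3 + 4 * k 4 + 6 * k 5,
    6 * k 0 + 12 * k 1 + 18 * k 2 + 12 * k 3 + 6 * k 4 + 9 * k 5,
    4 * k 0 + 8 * k 1 + 12 * k 2 + 10 * k 3 + 5 * k 4 + 6 * k 5,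
    2 * k 0 + 4 * k 1 + 6 * k 2 + 5 * k 3 + 4 * k 4 + 3 * k 5,
    3 * k 0 + 6 * k 1 + 9 * k 2 + 6 * k 3 + 3 * k 4 + 6 * k 5]

/-- Half of the quadratic form `k ↦ kᵀ (3 G⁻¹) k`. -/
def QQ (k : Fin 6 → ℤ) : ℤ :=
  2 * k 0 * k 0 + 5 * k 1 * k 1 + 9 * k 2 * k 2 + 5 * k 3 * k 3 + 2 * k 4 * k 4 + 3 * k 5 * k 5
  + k 0 * (5 * k 1 + 6 * k 2 + 4 * k 3 + 2 * k 4 + 3 * k 5)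
  + k 1 * (12 * k 2 + 8 * k 3 + 4 * k 4 + 6 * k 5)
  + k 2 * (12 * k 3 + 6 * k 4 + 9 * k 5)
  + k 3 * (5 * k 4 + 6 * k 5) + k 4 * (3 * k 5)

/-- The coset invariant: `k mod 2` together with a linear form mod 3. -/
def code (k : Fin 6 → ℤ) : ℤ :=
  k 0 % 2 + 2 * (k 1 % 2) + 4 * (k 2 % 2) + 8 * (k 3 % 2) + 16 * (k 4 % 2) + 32 * (k 5 % 2)
  + 64 * ((k 0 + 2 * k 1 + k 3 + 2 * k 4) % 3)

/-- Base 5 codes of minimal representatives of the cosets. -/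
def tab : List ℕ := [
  7812, 9061, 7815, 14056, 14037, 7796, 14040, 7831, 8937, 7936, 8940, 7691, 7710, 7911, 7707, 8956,
  8435, 7186, 8432, 7431, 7412, 7211, 7415, 8416, 7310, 8311, 7307, 8556, 8537, 8336, 8540, 7291,
  4687, 5936, 4690, 10931, 10912, 12161, 10915, 4706, 4610, 4811, 4607, 10816, 10835, 11036, 10832, 4591,
  11560, 10311, 11557, 5316, 5335, 4086, 5332, 11541, 10435, 11436, 10432, 4191, 4210, 5211, 4207, 10416,
  7810, 7813, 7807, 7816, 7835, 8036, 7832, 7791, 7695, 13936, 7692, 7931, 7912, 7711, 7915, 7708,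
  7187, 8436, 7190, 8433, 8420, 14661, 8417, 7206, 8312, 7311, 8315, 7308, 7295, 13536, 7292, 8331,
  10935, 4688, 10932, 4691, 4710, 10913, 4707, 10916, 4812, 10811, 4815, 11056, 11037, 4586, 11040, 4831,
  10312, 5311, 10315, 4106, 4087, 11536, 4090, 10331, 11437, 4186, 11440, 5231, 5212, 10411, 5215, 11456,
  9060, 7811, 9057, 7808, 7795, 14036, 7792, 9041, 7935, 8936, 7932, 7731, 7712, 7913, 7715, 7916,
  8437, 7188, 8440, 7191, 7210, 7411, 7207, 8456, 7312, 8313, 7315, 8316, 8335, 8536, 8332, 7331,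
  4695, 10936, 4692, 10933, 10920, 4711, 10917, 4708, 10812, 12061, 10815, 4606, 4587, 5836, 4590, 10831,
  5312, 4311, 5315, 11556, 11537, 10536, 11540, 5331, 4187, 5436, 4190, 10431, 10412, 11661, 10415, 4206]

/-- Minimal representatives of the cosets. -/
def rep (j : ℕ) (i : Fin 6) : ℤ := ((tab.getD j 0 / 5 ^ (i : ℕ) % 5 : ℕ) : ℤ) - 2

lemma digits (a b c d : ℤ) (ha : 0 ≤ a ∧ a < 2) (hc : 0 ≤ c ∧ c < 2)
    (h : a + 2 * b = c + 2 * d) : a = c ∧ b = d := by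
  omega

lemma code_nonneg (k : Fin 6 → ℤ) : 0 ≤ code k ∧ code k < 192 := by
  unfold code; omega

lemma code_eq_iff (k l : Fin 6 → ℤ) : code k = code l ↔
    k 0 % 2 = l 0 % 2 ∧ k 1 % 2 = l 1 % 2 ∧ k 2 % 2 = l 2 % 2 ∧ k 3 % 2 = l 3 % 2 ∧
    k 4 % 2 = l 4 % 2 ∧ k 5 % 2 = l 5 % 2 ∧
    (k 0 + 2 * k 1 + k 3 + 2 * k 4) % 3 = (l 0 + 2 * l 1 + l 3 + 2 * l 4) % 3 := by
  constructor
  · intro h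
    have hb : ∀ x : ℤ, 0 ≤ x % 2 ∧ x % 2 < 2 := fun x => by omega
    have nest : ∀ k, code k = k 0 % 2 + 2 * (k 1 % 2 + 2 * (k 2 % 2 + 2 * (k 3 % 2 +
        2 * (k 4 % 2 + 2 * (k 5 % 2 + 2 * ((k 0 + 2 * k 1 + k 3 + 2 * k 4) % 3)))))) := by
      intro k; unfold code; ring
    rw [nest, nest] at h
    obtain ⟨h0, h⟩ := digits _ _ _ _ (hb _) (hb _) h
    obtain ⟨h1, h⟩ := digits _ _ _ _ (hb _) (hb _) h
    obtain ⟨h2, h⟩ := digits _ _ _ _ (hb _) (hb _) h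
    obtain ⟨h3, h⟩ := digits _ _ _ _ (hb _) (hb _) h
    obtain ⟨h4, h⟩ := digits _ _ _ _ (hb _) (hb _) h
    obtain ⟨h5, h⟩ := digits _ _ _ _ (hb _) (hb _) h
    exact ⟨h0, h1, h2, h3, h4, h5, h⟩
  · rintro ⟨h0, h1, h2, h3, h4, h5, h6⟩
    unfold code
    rw [h0, h1, h2, h3, h4, h5, h6]

lemma code_zero : code 0 = 0 := by decide +kernel

lemma code_sub (k l : Fin 6 → ℤ) : code (k - l) = 0 ↔ code k = code l := by
  rw [← code_zero, code_eq_iff, code_eq_iff]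
  simp only [Pi.sub_apply, Pi.zero_apply]
  have hp : ∀ a b : ℤ, (a - b) % 2 = 0 % 2 ↔ a % 2 = b % 2 := fun a b => by omega
  rw [hp, hp, hp, hp, hp, hp]
  have h3 : (k 0 - l 0 + 2 * (k 1 - l 1) + (k 3 - l 3) + 2 * (k 4 - l 4)) % 3
      = (0 + 2 * 0 + 0 + 2 * 0) % 3 ↔
    (k 0 + 2 * k 1 + k 3 + 2 * k 4) % 3 = (l 0 + 2 * l 1 + l 3 + 2 * l 4) % 3 := by
    generalize hx : k 0 + 2 * k 1 + k 3 + 2 * k 4 = x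
    generalize hy : l 0 + 2 * l 1 + l 3 + 2 * l 4 = y
    rw [show k 0 - l 0 + 2 * (k 1 - l 1) + (k 3 - l 3) + 2 * (k 4 - l 4) = x - y by
      rw [← hx, ← hy]; ring]
    omega
  rw [h3]

lemma code_zero_iff (k : Fin 6 → ℤ) : code k = 0 ↔ ∃ m : Fin 6 → ℤ, ∀ j, bb k j = 6 * m j := by
  rw [← code_zero, code_eq_iff]
  simp only [Pi.zero_apply]
  constructor
  · rintro ⟨h0, h1, h2, h3, h4, h5, h6⟩
    obtain ⟨a0, e0⟩ : ∃ a, k 0 = 2 * a := ⟨k 0 / 2, by omega⟩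
    obtain ⟨a1, e1⟩ : ∃ a, k 1 = 2 * a := ⟨k 1 / 2, by omega⟩
    obtain ⟨a2, e2⟩ : ∃ a, k 2 = 2 * a := ⟨k 2 / 2, by omega⟩
    obtain ⟨a3, e3⟩ : ∃ a, k 3 = 2 * a := ⟨k 3 / 2, by omega⟩
    obtain ⟨a4, e4⟩ : ∃ a, k 4 = 2 * a := ⟨k 4 / 2, by omega⟩
    obtain ⟨a5, e5⟩ : ∃ a, k 5 = 2 * a := ⟨k 5 / 2, by omega⟩
    rw [e0, e1, e3, e4] at h6
    have h6' : ∀ j, (6 : ℤ) ∣ bb k j := by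
      intro j
      fin_cases j <;> simp [bb, e0, e1, e2, e3, e4, e5] <;> omega
    choose m hm using h6'
    exact ⟨m, hm⟩
  · rintro ⟨m, hm⟩
    have h0 := hm 0
    have h1 := hm 1
    have h2 := hm 2
    have h3 := hm 3
    have h4 := hm 4
    have h5 := hm 5
    simp [bb] at h0 h1 h2 h3 h4 h5
    have e0 : k 0 = 2 * (2 * m 0 - m 1) := by linarith
    have e1 : k 1 = 2 * (- m 0 + 2 * m 1 - m 2) := by linarith
    have e2 : k 2 = 2 * (- m 1 + 2 * m 2 - m 3 - m 5) := by linarith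
    have e3 : k 3 = 2 * (- m 2 + 2 * m 3 - m 4) := by linarith
    have e4 : k 4 = 2 * (- m 3 + 2 * m 4) := by linarith
    have e5 : k 5 = 2 * (- m 2 + 2 * m 5) := by linarith
    clear h0 h1 h2 h3 h4 h5 hm
    refine ⟨?_, ?_, ?_, ?_, ?_, ?_, ?_⟩ <;> omega

lemma QQ_mod (k l : Fin 6 → ℤ) (h : code k = code l) : (6 : ℤ) ∣ QQ k - QQ l := by
  obtain ⟨m, hm⟩ := (code_zero_iff _).1 ((code_sub k l).2 h)
  have h0 := hm 0
  have h1 := hm 1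
  have h2 := hm 2
  have h3 := hm 3
  have h4 := hm 4
  have h5 := hm 5
  simp [bb] at h0 h1 h2 h3 h4 h5
  have e0 : k 0 = l 0 + 2 * (2 * m 0 - m 1) := by omega
  have e1 : k 1 = l 1 + 2 * (- m 0 + 2 * m 1 - m 2) := by omega
  have e2 : k 2 = l 2 + 2 * (- m 1 + 2 * m 2 - m 3 - m 5) := by omega
  have e3 : k 3 = l 3 + 2 * (- m 2 + 2 * m 3 - m 4) := by omega
  have e4 : k 4 = l 4 + 2 * (- m 3 + 2 * m 4) := by omega
  have e5 : k 5 = l 5 + 2 * (- m 2 + 2 * m 5) := by omega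
  refine ⟨l 0 * m 0 + l 1 * m 1 + l 2 * m 2 + l 3 * m 3 + l 4 * m 4 + l 5 * m 5
    + 2 * (m 0 ^ 2 + m 1 ^ 2 + m 2 ^ 2 + m 3 ^ 2 + m 4 ^ 2 + m 5 ^ 2 - m 0 * m 1 - m 1 * m 2
    - m 2 * m 3 - m 3 * m 4 - m 2 * m 5), ?_⟩
  unfold QQ
  rw [e0, e1, e2, e3, e4, e5]
  ring

/-- If all coordinates are even then `QQ` is divisible by 4. -/
lemma QQ_four (k : Fin 6 → ℤ) (h : ∀ i, k i % 2 = 0) : (4 : ℤ) ∣ QQ k := by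
  have h' : ∀ i, ∃ a, k i = 2 * a := fun i => ⟨k i / 2, by have := h i; omega⟩
  choose a ha using h'
  refine ⟨QQ a, ?_⟩
  simp only [QQ, ha]
  ring

lemma rep_code : ∀ j < 192, code (rep j) = (j : ℤ) := by decide +kernel

lemma rep_cases : ∀ j < 192, j = 0 ∨
    (QQ (rep j) = 2 ∧ code (6 • rep j) = 0 ∧ code (2 • rep j) ≠ 0 ∧ code (3 • rep j) ≠ 0) ∨
    (QQ (rep j) = 3 ∧ code (2 • rep j) = 0) ∨
    (QQ (rep j) = 5 ∧ code (6 • rep j) = 0 ∧ code (2 • rep j) ≠ 0 ∧ code (3 • rep j) ≠ 0) ∨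
    (QQ (rep j) = 6 ∧ code (2 • rep j) = 0) ∨
    (QQ (rep j) = 8 ∧ code (3 • rep j) = 0 ∧ ∀ i, rep j i % 2 = 0) := by decide +kernel

lemma rep_zero : QQ (rep 0) = 0 := by decide +kernel

lemma rep_card : ((Finset.range 192).filter fun j => QQ (rep j) = 2).card = 54 ∧
    ((Finset.range 192).filter fun j => QQ (rep j) = 3).card = 36 ∧
    ((Finset.range 192).filter fun j => QQ (rep j) = 5).card = 72 ∧
    ((Finset.range 192).filter fun j => QQ (rep j) = 6).card = 27 ∧
    ((Finset.range 192).filter fun j => QQ (rep j) = 8).card = 2 := by decide +kernel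

/-- The vector with inner products `k i` against `e i`. -/
def vv (e : Fin 6 → E 6) (k : Fin 6 → ℤ) : E 6 := ∑ j, ((bb k j : ℝ) / 6) • e j

lemma bb_add (k l : Fin 6 → ℤ) : bb (k + l) = bb k + bb l := by
  ext j; fin_cases j <;> simp [bb] <;> ring

lemma bb_nsmul (n : ℕ) (k : Fin 6 → ℤ) : bb (n • k) = n • bb k := by
  ext j; fin_cases j <;> simp [bb] <;> ring

lemma vv_add (e : Fin 6 → E 6) (k l : Fin 6 → ℤ) : vv e (k + l) = vv e k + vv e l := by
  simp only [vv, bb_add, ← Finset.sum_add_distrib, ← add_smul]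
  refine Finset.sum_congr rfl fun j _ => ?_
  congr 1
  simp only [Pi.add_apply]
  push_cast
  ring

lemma vv_inner (e : Fin 6 → E 6) (hGram : ∀ i j, ⟪e i, e j⟫ = 2 * G6 i j)
    (k : Fin 6 → ℤ) (i : Fin 6) : ⟪vv e k, e i⟫ = (k i : ℝ) := by
  simp only [vv, sum_inner, real_inner_smul_left, hGram]
  fin_cases i <;> simp [Fin.sum_univ_six, bb, G6] <;> ring

lemma vv_norm (e : Fin 6 → E 6) (hGram : ∀ i j, ⟪e i, e j⟫ = 2 * G6 i j)
    (k : Fin 6 → ℤ) : ‖vv e k‖ ^ 2 = (QQ k : ℝ) / 3 := by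
  rw [← real_inner_self_eq_norm_sq]
  conv_lhs => rw [show ⟪vv e k, vv e k⟫ = ⟪vv e k, ∑ j, ((bb k j : ℝ) / 6) • e j⟫ from rfl]
  simp only [inner_sum, real_inner_smul_right, vv_inner e hGram]
  simp [Fin.sum_univ_six, bb, QQ]
  ring

lemma vv_mem_span (e : Fin 6 → E 6) (he : LinearIndependent ℝ e) (k : Fin 6 → ℤ) :
    vv e k ∈ Submodule.span ℤ (Set.range e) ↔ code k = 0 := by
  rw [code_zero_iff, Submodule.mem_span_range_iff_exists_fun]
  constructor
  · rintro ⟨m, hm⟩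
    refine ⟨m, fun j => ?_⟩
    have h2 : ∑ j, ((m j : ℝ) - (bb k j : ℝ) / 6) • e j = 0 := by
      simp only [sub_smul, Finset.sum_sub_distrib, Int.cast_smul_eq_zsmul]
      rw [hm]
      simp [vv]
    have h3 := Fintype.linearIndependent_iff.1 he _ h2 j
    have h4 : (bb k j : ℝ) = 6 * m j := by linarith
    exact_mod_cast h4
  · rintro ⟨m, hm⟩
    refine ⟨m, ?_⟩
    unfold vv
    refine Finset.sum_congr rfl fun j _ => ?_
    rw [hm, ← Int.cast_smul_eq_zsmul ℝ]
    congr 1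
    push_cast
    ring

lemma vv_mem_dual (e : Fin 6 → E 6) (hGram : ∀ i j, ⟪e i, e j⟫ = 2 * G6 i j)
    (k : Fin 6 → ℤ) : vv e k ∈ dualLattice (Submodule.span ℤ (Set.range e)) := by
  intro y hy
  obtain ⟨m, rfl⟩ := (Submodule.mem_span_range_iff_exists_fun ℤ).1 hy
  refine ⟨∑ j, m j * k j, ?_⟩
  simp only [inner_sum, ← Int.cast_smul_eq_zsmul ℝ, real_inner_smul_right, vv_inner e hGram]
  push_cast
  rfl

lemma dual_eq_vv (e : Fin 6 → E 6) (he : LinearIndependent ℝ e)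
    (hGram : ∀ i j, ⟪e i, e j⟫ = 2 * G6 i j) (x : E 6)
    (hx : x ∈ dualLattice (Submodule.span ℤ (Set.range e))) : ∃ k, x = vv e k := by
  have h : ∀ i, ∃ a : ℤ, ⟪x, e i⟫ = (a : ℝ) :=
    fun i => hx (e i) (Submodule.subset_span ⟨i, rfl⟩)
  choose k hk using h
  refine ⟨k, ?_⟩
  have htop : Submodule.span ℝ (Set.range e) = ⊤ :=
    he.span_eq_top_of_card_eq_finrank' (by simp)
  rw [← sub_eq_zero, ← inner_self_eq_zero (𝕜 := ℝ)]
  have hall : ∀ y ∈ Submodule.span ℝ (Set.range e), ⟪x - vv e k, y⟫ = 0 := by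
    intro y hy
    obtain ⟨m, rfl⟩ := (Submodule.mem_span_range_iff_exists_fun ℝ).1 hy
    simp [inner_sum, real_inner_smul_right, inner_sub_left, vv_inner e hGram, hk]
  exact hall _ (by rw [htop]; trivial)

/-- The coset of `vv e k`. -/
def cc (e : Fin 6 → E 6) (hGram : ∀ i j, ⟪e i, e j⟫ = 2 * G6 i j) (k : Fin 6 → ℤ) :
    DualQuot (Submodule.span ℤ (Set.range e)) :=
  Submodule.Quotient.mk ⟨vv e k, vv_mem_dual e hGram k⟩

section
variable (e : Fin 6 → E 6) (he : LinearIndependent ℝ e)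
  (hGram : ∀ i j, ⟪e i, e j⟫ = 2 * G6 i j)

lemma cc_add (k l : Fin 6 → ℤ) : cc e hGram (k + l) = cc e hGram k + cc e hGram l := by
  unfold cc
  rw [← Submodule.Quotient.mk_add]
  congr 1
  exact Subtype.ext (vv_add e k l)

/-- `cc` as a homomorphism. -/
def ccHom : (Fin 6 → ℤ) →+ DualQuot (Submodule.span ℤ (Set.range e)) :=
  AddMonoidHom.mk' (cc e hGram) (cc_add e hGram)

lemma cc_nsmul (n : ℕ) (k : Fin 6 → ℤ) : n • cc e hGram k = cc e hGram (n • k) :=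
  (map_nsmul (ccHom e hGram) n k).symm

lemma cc_sub (k l : Fin 6 → ℤ) : cc e hGram (k - l) = cc e hGram k - cc e hGram l :=
  map_sub (ccHom e hGram) k l
end

lemma cc_eq_zero (e : Fin 6 → E 6) (he : LinearIndependent ℝ e)
    (hGram : ∀ i j, ⟪e i, e j⟫ = 2 * G6 i j) (k : Fin 6 → ℤ) :
    cc e hGram k = 0 ↔ code k = 0 := by
  unfold cc
  rw [Submodule.Quotient.mk_eq_zero, Submodule.mem_comap, ← vv_mem_span e he k]
  rfl

lemma cc_eq (e : Fin 6 → E 6) (he : LinearIndependent ℝ e)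
    (hGram : ∀ i j, ⟪e i, e j⟫ = 2 * G6 i j) (k l : Fin 6 → ℤ) :
    cc e hGram k = cc e hGram l ↔ code k = code l := by
  rw [← code_sub, ← cc_eq_zero e he hGram, cc_sub, sub_eq_zero]

lemma cc_surj (e : Fin 6 → E 6) (he : LinearIndependent ℝ e)
    (hGram : ∀ i j, ⟪e i, e j⟫ = 2 * G6 i j)
    (c : DualQuot (Submodule.span ℤ (Set.range e))) : ∃ k, cc e hGram k = c := by
  obtain ⟨⟨x, hx⟩, rfl⟩ := Submodule.Quotient.mk_surjective _ c
  obtain ⟨k, rfl⟩ := dual_eq_vv e he hGram x hx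
  exact ⟨k, rfl⟩

lemma cc_bij (e : Fin 6 → E 6) (he : LinearIndependent ℝ e)
    (hGram : ∀ i j, ⟪e i, e j⟫ = 2 * G6 i j) :
    Function.Bijective (fun j : Fin 192 => cc e hGram (rep j)) := by
  constructor
  · intro i j h
    have h1 := (cc_eq e he hGram _ _).1 h
    rw [rep_code _ i.2, rep_code _ j.2] at h1
    exact Fin.ext (by exact_mod_cast h1)
  · intro c
    obtain ⟨k, rfl⟩ := cc_surj e he hGram c
    have hk := code_nonneg k
    refine ⟨⟨(code k).toNat, by omega⟩, ?_⟩
    refine (cc_eq e he hGram _ _).2 ?_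
    rw [rep_code _ (by simp only; omega)]
    simp only
    omega

/-- Criterion for the minimal norm of a coset. -/
lemma cc_min (e : Fin 6 → E 6) (he : LinearIndependent ℝ e)
    (hGram : ∀ i j, ⟪e i, e j⟫ = 2 * G6 i j) (k : Fin 6 → ℤ)
    (h : ∀ l, code l = code k → 0 ≤ QQ l → QQ k ≤ QQ l) :
    CosetMinNorm _ (cc e hGram k) ((QQ k : ℝ) / 3) := by
  constructor
  · exact ⟨⟨vv e k, vv_mem_dual e hGram k⟩, rfl, (vv_norm e hGram k).symm⟩
  · rintro r ⟨⟨x, hx⟩, hxc, rfl⟩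
    obtain ⟨l, rfl⟩ := dual_eq_vv e he hGram x hx
    have hl : code l = code k := (cc_eq e he hGram l k).1 hxc
    have hn := vv_norm e hGram l
    have hpos : (0 : ℝ) ≤ QQ l := by
      have := sq_nonneg ‖vv e l‖
      linarith
    have h2 := h l hl (by exact_mod_cast hpos)
    have h3 : (QQ k : ℝ) ≤ QQ l := by exact_mod_cast h2
    simp only
    rw [hn]
    linarith

lemma QQ_zero (e : Fin 6 → E 6) (hGram : ∀ i j, ⟪e i, e j⟫ = 2 * G6 i j) (k : Fin 6 → ℤ)
    (h : QQ k = 0) : k = 0 := by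
  have hn := vv_norm e hGram k
  rw [h] at hn
  have hv : vv e k = 0 := by simpa using hn
  ext i
  have := vv_inner e hGram k i
  rw [hv, inner_zero_left] at this
  simpa using this.symm

lemma rep_min (e : Fin 6 → E 6) (he : LinearIndependent ℝ e)
    (hGram : ∀ i j, ⟪e i, e j⟫ = 2 * G6 i j) (j : ℕ) (hj : j < 192) :
    CosetMinNorm _ (cc e hGram (rep j)) ((QQ (rep j) : ℝ) / 3) := by
  apply cc_min e he hGram
  intro l hl hpos
  have hm := QQ_mod _ _ hl
  rcases rep_cases j hj with h | h | h | h | h | h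
  · rw [h, rep_zero]; exact hpos
  · omega
  · omega
  · omega
  · by_contra hlt
    have h0 : QQ l = 0 := by omega
    have := QQ_zero e hGram l h0
    subst this
    rw [rep_code j hj] at hl
    have hj0 : j = 0 := by
      have := code_zero
      omega
    have h6 := h.1
    rw [hj0, rep_zero] at h6
    omega
  · have hev : ∀ i, l i % 2 = 0 := by
      have hr := h.2.2
      have r0 := hr 0
      have r1 := hr 1
      have r2 := hr 2
      have r3 := hr 3
      have r4 := hr 4
      have r5 := hr 5
      obtain ⟨h0, h1, h2, h3, h4, h5, -⟩ := (code_eq_iff _ _).1 hl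
      intro i
      fin_cases i
      · exact h0.trans r0
      · exact h1.trans r1
      · exact h2.trans r2
      · exact h3.trans r3
      · exact h4.trans r4
      · exact h5.trans r5
    have := QQ_four l hev
    omega

lemma rep_order (e : Fin 6 → E 6) (he : LinearIndependent ℝ e)
    (hGram : ∀ i j, ⟪e i, e j⟫ = 2 * G6 i j) (j : ℕ) (hj : j < 192) (hj0 : j ≠ 0) :
    (QQ (rep j) = 2 ∧ addOrderOf (cc e hGram (rep j)) = 6) ∨
    (QQ (rep j) = 3 ∧ addOrderOf (cc e hGram (rep j)) = 2) ∨
    (QQ (rep j) = 5 ∧ addOrderOf (cc e hGram (rep j)) = 6) ∨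
    (QQ (rep j) = 6 ∧ addOrderOf (cc e hGram (rep j)) = 2) ∨
    (QQ (rep j) = 8 ∧ addOrderOf (cc e hGram (rep j)) = 3) := by
  have key : ∀ n, n • cc e hGram (rep j) = 0 ↔ code (n • rep j) = 0 := fun n => by
    rw [cc_nsmul, cc_eq_zero e he]
  have hne : cc e hGram (rep j) ≠ 0 := by
    rw [Ne, cc_eq_zero e he, rep_code j hj]
    exact_mod_cast hj0
  have six : code (6 • rep j) = 0 → code (2 • rep j) ≠ 0 → code (3 • rep j) ≠ 0 →
      addOrderOf (cc e hGram (rep j)) = 6 := by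
    intro h6 h2 h3
    rw [← key] at h6
    rw [Ne, ← key] at h2 h3
    have d6 := addOrderOf_dvd_of_nsmul_eq_zero h6
    rw [← addOrderOf_dvd_iff_nsmul_eq_zero] at h2 h3
    have hle := Nat.le_of_dvd (by norm_num) d6
    generalize addOrderOf (cc e hGram (rep j)) = n at *
    interval_cases n <;> omega
  rcases rep_cases j hj with h | h | h | h | h | h
  · exact absurd h hj0
  · exact Or.inl ⟨h.1, six h.2.1 h.2.2.1 h.2.2.2⟩
  · exact Or.inr (Or.inl ⟨h.1, addOrderOf_eq_prime ((key 2).2 h.2) hne⟩)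
  · exact Or.inr (Or.inr (Or.inl ⟨h.1, six h.2.1 h.2.2.1 h.2.2.2⟩))
  · exact Or.inr (Or.inr (Or.inr (Or.inl ⟨h.1, addOrderOf_eq_prime ((key 2).2 h.2) hne⟩)))
  · exact Or.inr (Or.inr (Or.inr (Or.inr ⟨h.1, addOrderOf_eq_prime ((key 3).2 h.2.1) hne⟩)))

/-- Counting the cosets of a given nonzero minimal norm. -/
lemma count (e : Fin 6 → E 6) (he : LinearIndependent ℝ e)
    (hGram : ∀ i j, ⟪e i, e j⟫ = 2 * G6 i j) (q : ℤ) (m : ℝ) (n N : ℕ) (hm : m = (q : ℝ) / 3)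
    (hq : q ≠ 0)
    (hn : ∀ j < 192, j ≠ 0 → QQ (rep j) = q → addOrderOf (cc e hGram (rep j)) = n)
    (hN : ((Finset.range 192).filter fun j => QQ (rep j) = q).card = N) :
    {c : DualQuot (Submodule.span ℤ (Set.range e)) |
      CosetMinNorm _ c m ∧ addOrderOf c = n}.ncard = N := by
  have hset : {c : DualQuot (Submodule.span ℤ (Set.range e)) |
      CosetMinNorm _ c m ∧ addOrderOf c = n} = (fun j => cc e hGram (rep j)) ''
      ((Finset.range 192).filter fun j => QQ (rep j) = q : Finset ℕ) := by
    ext c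
    constructor
    · rintro ⟨h1, -⟩
      obtain ⟨j, rfl⟩ := (cc_bij e he hGram).2 c
      refine ⟨j, ?_, rfl⟩
      have h3 := h1.unique (rep_min e he hGram j j.2)
      rw [hm] at h3
      have h4 : (q : ℝ) = QQ (rep j) := by linarith
      have h5 : q = QQ (rep j) := by exact_mod_cast h4
      simp [h5]
    · rintro ⟨j, hj, rfl⟩
      simp only [Finset.coe_filter, Finset.mem_range, Set.mem_ofPred_eq] at hj
      have hj0 : j ≠ 0 := by
        rintro rfl
        exact hq (hj.2.symm.trans rep_zero)
      refine ⟨?_, hn j hj.1 hj0 hj.2⟩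
      have := rep_min e he hGram j hj.1
      rw [hj.2, ← hm] at this
      exact this
  rw [hset, Set.InjOn.ncard_image, Set.ncard_coe_finset, hN]
  intro i hi j hj h
  simp only [Finset.coe_filter, Finset.mem_range, Set.mem_ofPred_eq] at hi hj
  have h1 := (cc_eq e he hGram _ _).1 h
  rw [rep_code _ hi.1, rep_code _ hj.1] at h1
  exact_mod_cast h1

/-- If `e1, …, e6` are linearly independent with Gram matrix `2·G6`, and `Λ₆` is their
ℤ-span, then the quotient `Λ₆♯/Λ₆` has exactly 192 elements: the zero coset,
54 cosets of minimal norm 2/3 and order 6, 36 cosets of minimal norm 1 and order 2,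
72 cosets of minimal norm 5/3 and order 6, 27 cosets of minimal norm 2 and order 2,
and 2 cosets of minimal norm 8/3 and order 3. -/
theorem Λ6_dual_quotient_classes (e : Fin 6 → E 6)
    (he : LinearIndependent ℝ e)
    (hGram : ∀ i j, ⟪e i, e j⟫ = 2 * G6 i j) :
    Nat.card (DualQuot (Submodule.span ℤ (Set.range e))) = 192 ∧
    (∀ c : DualQuot (Submodule.span ℤ (Set.range e)), c = 0 ∨
      (CosetMinNorm _ c (2/3) ∧ addOrderOf c = 6) ∨
      (CosetMinNorm _ c 1 ∧ addOrderOf c = 2) ∨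
      (CosetMinNorm _ c (5/3) ∧ addOrderOf c = 6) ∨
      (CosetMinNorm _ c 2 ∧ addOrderOf c = 2) ∨
      (CosetMinNorm _ c (8/3) ∧ addOrderOf c = 3)) ∧
    {c : DualQuot (Submodule.span ℤ (Set.range e)) |
      CosetMinNorm _ c (2/3) ∧ addOrderOf c = 6}.ncard = 54 ∧
    {c : DualQuot (Submodule.span ℤ (Set.range e)) |
      CosetMinNorm _ c 1 ∧ addOrderOf c = 2}.ncard = 36 ∧
    {c : DualQuot (Submodule.span ℤ (Set.range e)) |
      CosetMinNorm _ c (5/3) ∧ addOrderOf c = 6}.ncard = 72 ∧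
    {c : DualQuot (Submodule.span ℤ (Set.range e)) |
      CosetMinNorm _ c 2 ∧ addOrderOf c = 2}.ncard = 27 ∧
    {c : DualQuot (Submodule.span ℤ (Set.range e)) |
      CosetMinNorm _ c (8/3) ∧ addOrderOf c = 3}.ncard = 2 := by
  obtain ⟨c2, c3, c5, c6, c8⟩ := rep_card
  refine ⟨?_, ?_, ?_, ?_, ?_, ?_, ?_⟩
  · rw [← Nat.card_eq_of_bijective _ (cc_bij e he hGram), Nat.card_eq_fintype_card,
      Fintype.card_fin]
  · intro c
    obtain ⟨j, rfl⟩ := (cc_bij e he hGram).2 c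
    simp only
    by_cases hj : (j : ℕ) = 0
    · left
      rw [cc_eq_zero e he, rep_code _ j.2, hj]
      rfl
    right
    have hmin := rep_min e he hGram j j.2
    rcases rep_order e he hGram j j.2 hj with h | h | h | h | h
    · rw [h.1] at hmin
      exact Or.inl ⟨by convert hmin using 1; norm_num, h.2⟩
    · rw [h.1] at hmin
      exact Or.inr (Or.inl ⟨by convert hmin using 1; norm_num, h.2⟩)
    · rw [h.1] at hmin
      exact Or.inr (Or.inr (Or.inl ⟨by convert hmin using 1; norm_num, h.2⟩))
    · rw [h.1] at hmin
      exact Or.inr (Or.inr (Or.inr (Or.inl ⟨by convert hmin using 1; norm_num, h.2⟩)))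
    · rw [h.1] at hmin
      exact Or.inr (Or.inr (Or.inr (Or.inr ⟨by convert hmin using 1; norm_num, h.2⟩)))
  · refine count e he hGram 2 _ _ _ (by norm_num) (by norm_num) (fun j hj hj0 hq => ?_) c2
    have := rep_order e he hGram j hj hj0
    omega
  · refine count e he hGram 3 _ _ _ (by norm_num) (by norm_num) (fun j hj hj0 hq => ?_) c3
    have := rep_order e he hGram j hj hj0
    omega
  · refine count e he hGram 5 _ _ _ (by norm_num) (by norm_num) (fun j hj hj0 hq => ?_) c5
    have := rep_order e he hGram j hj hj0
    omega
  · refine count e he hGram 6 _ _ _ (by norm_num) (by norm_num) (fun j hj hj0 hq => ?_) c6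
    have := rep_order e he hGram j hj hj0
    omega
  · refine count e he hGram 8 _ _ _ (by norm_num) (by norm_num) (fun j hj hj0 hq => ?_) c8
    have := rep_order e he hGram j hj hj0
    omega
end
end
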